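/- arXiv:1607.00062 — 2 statements merged into one kernel-verified Lean document; each statement's English description precedes it below -/
import Mathlib

section
/- Let A be a Noetherian domain, let R = A[[x_1, ..., x_n]] be a power series ring over A, and let I = (x_1, ..., x_n) ⊆ R. Then for every finitely generated R-module M there exists a nonzero element g ∈ A such that for every i ≥ 0 the local cohomology module H^i_I(M) ⊗_A A_g is a free A_g-module. -/
open scoped TensorProduct

/-!
Write `R = A⟦x₁, …, xₙ⟧`. Since `Hⁱ_I(R) = 0` for `i < n`, dimension shifting along finite free
presentations reduces the theorem to the kernel of a map `Hⁿ_I(N) → Hⁿ_I(F)` with `F` finite free.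
The module `Hⁿ_I(R)`, whose elements are polynomials in the inverse variables, carries an
`A`-linear residue that identifies `Hⁿ_I(F) = Hom_R(Fᵛ, Hⁿ_I(R))` with the `A`-linear functionals
on `Fᵛ` which depend only on finitely many coefficients. The kernel is thereby dual to a quotient
`V / U` of submodules `U ⊆ V` of a finite free `R`-module, except that only functionals continuous
for the topology of coefficientwise convergence appear; by the Artin–Rees lemma the maps in question
are strict for that topology. As `R` is Noetherian, one nonzero element of `A` can be inverted so
that each of these submodules has an element with invertible leading coefficient at every leading
exponent. They then have standard bases, and the dual of `V / U` is free on the exponents which are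
leading for `V` but not for `U`.
-/

namespace GenericFreeness

open CategoryTheory Limits Opposite

noncomputable section

universe u v

/-! ## Functoriality and long exact sequences of `Ext` -/

section Ext

variable {R : Type*} [Ring R] {C : Type u} [Category.{v} C] [Abelian C] [Linear R C]
  [EnoughProjectives C]

variable (R) in
/-- The cochain complex `Hom(P, Y)`, where `P` is the chosen projective resolution of `X`; its
cohomology computes `Ext R C · X Y`. -/
abbrev homComplex (X Y : C) : CochainComplex (ModuleCat.{v} R) ℕ :=
  (projectiveResolution X).complex.linearYonedaObj R Y

variable (R) in
/-- The map `Hom(P, Y) ⟶ Hom(P, Y')` induced by `f : Y ⟶ Y'`. -/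
def homComplexMap (X : C) {Y Y' : C} (f : Y ⟶ Y') : homComplex R X Y ⟶ homComplex R X Y' :=
  (HomologicalComplex.unopFunctor _ _).map
    (((NatTrans.mapHomologicalComplex (NatTrans.rightOp ((linearYoneda R _).map f)) _).app
      (projectiveResolution X).complex)).op

variable (R) in
/-- The map `Hom(P', Y) ⟶ Hom(P, Y)` induced by a chain map `φ : P ⟶ P'` between the chosen
projective resolutions of `X` and `X'`. -/
def homComplexPrecomp {X X' : C}
    (φ : (projectiveResolution X).complex ⟶ (projectiveResolution X').complex) (Y : C) :
    homComplex R X' Y ⟶ homComplex R X Y :=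
  (HomologicalComplex.unopFunctor _ _).map
    ((((linearYoneda R _).obj Y).rightOp.mapHomologicalComplex _).map φ).op

theorem homologyUnop_inv_naturality {D : Type*} [Category* D] [Abelian D]
    {K L : ChainComplex Dᵒᵖ ℕ} (φ : K ⟶ L) (i : ℕ) :
    CommSq (HomologicalComplex.homologyMap φ i).unop (HomologicalComplex.homologyUnop L i).inv
      (HomologicalComplex.homologyUnop K i).inv
      (HomologicalComplex.homologyMap ((HomologicalComplex.unopFunctor _ _).map φ.op) i) :=
  CommSq.vert_inv (g := HomologicalComplex.homologyUnop L i)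
    (h := HomologicalComplex.homologyUnop K i)
    ⟨Quiver.Hom.op_inj (HomologicalComplex.homologyOp_hom_naturality
      ((HomologicalComplex.unopFunctor _ _).map φ.op) i).symm⟩

variable (R) in
/-- The comparison of `Ext R C i X Y` with the cohomology of `homComplex R X Y`. -/
abbrev extIso (i : ℕ) (X Y : C) :
    ((Ext R C i).obj (op X)).obj Y ≅ (homComplex R X Y).homology i :=
  (projectiveResolution X).isoExt i Y

theorem extIso_naturality (i : ℕ) (X : C) {Y Y' : C} (f : Y ⟶ Y') :
    ((Ext R C i).obj (op X)).map f ≫ (extIso R i X Y').hom =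
      (extIso R i X Y).hom ≫ HomologicalComplex.homologyMap (homComplexMap R X f) i := by
  let α := NatTrans.rightOp ((linearYoneda R C).map f)
  have h := ProjectiveResolution.leftDerived_app_eq α (projectiveResolution X) i
  rw [← Iso.inv_comp_eq] at h
  exact ((CommSq.mk (congrArg Quiver.Hom.unop h)).vert_comp
    (homologyUnop_inv_naturality _ i)).w

theorem extIso_naturality_left (i : ℕ) {X X' : C} (f : X ⟶ X')
    (φ : (projectiveResolution X).complex ⟶ (projectiveResolution X').complex)
    (hφ : φ.f 0 ≫ (projectiveResolution X').π.f 0 = (projectiveResolution X).π.f 0 ≫ f)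
    (Y : C) :
    ((Ext R C i).map f.op).app Y ≫ (extIso R i X Y).hom =
      (extIso R i X' Y).hom ≫ HomologicalComplex.homologyMap (homComplexPrecomp R φ Y) i :=
  let h := ProjectiveResolution.isoLeftDerivedObj_inv_naturality f _ _ φ hφ
    ((linearYoneda R C).obj Y).rightOp i
  ((CommSq.mk (congrArg Quiver.Hom.unop h)).vert_comp (homologyUnop_inv_naturality _ i)).w

theorem homComplexPrecomp_comp_homComplexMap {X X' : C}
    (φ : (projectiveResolution X).complex ⟶ (projectiveResolution X').complex)
    {Y Y' : C} (f : Y ⟶ Y') :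
    homComplexPrecomp R φ Y ≫ homComplexMap R X f =
      homComplexMap R X' f ≫ homComplexPrecomp R φ Y' := by
  ext i x : 3
  exact Category.assoc (φ.f i) (show (projectiveResolution X').complex.X i ⟶ Y from x) f

variable (R) in
/-- The functor `Y ↦ Hom(P, Y)` applied to a short complex, `P` being the chosen projective
resolution of `X`. -/
def homShortComplex (X : C) (S : ShortComplex C) :
    ShortComplex (CochainComplex (ModuleCat.{v} R) ℕ) :=
  ShortComplex.mk (homComplexMap R X S.f) (homComplexMap R X S.g) (by
    ext i (x : (projectiveResolution X).complex.X i ⟶ S.X₁) : 3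
    exact (Category.assoc x S.f S.g).trans (S.zero ▸ comp_zero))

theorem homShortComplex_shortExact (X : C) {S : ShortComplex C} (hS : S.ShortExact) :
    (homShortComplex R X S).ShortExact := by
  have := hS.mono_f
  have := hS.epi_g
  refine HomologicalComplex.shortExact_of_degreewise_shortExact _ fun i ↦ .mk' ?_ ?_ ?_
  · rw [ShortComplex.ShortExact.moduleCat_exact_iff_function_exact]
    refine fun x ↦ ⟨fun hx ↦ ⟨hS.exact.lift (k := x) hx, hS.exact.lift_f x hx⟩, ?_⟩
    rintro ⟨y, rfl⟩
    exact ConcreteCategory.congr_hom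
      (congrArg (HomologicalComplex.Hom.f · i) (homShortComplex R X S).zero) y
  · rw [ModuleCat.mono_iff_injective]
    exact fun x y h ↦ (cancel_mono S.f).1 h
  · rw [ModuleCat.epi_iff_surjective]
    exact fun x ↦ ⟨Projective.factorThru (P := (projectiveResolution X).complex.X i) x S.g,
      Projective.factorThru_comp (P := (projectiveResolution X).complex.X i) x S.g⟩

variable (R) in
/-- The connecting homomorphism of the long exact sequence of `Ext` in the second variable. -/
def extδ (X : C) {S : ShortComplex C} (hS : S.ShortExact) (i : ℕ) :
    ((Ext R C i).obj (op X)).obj S.X₃ ⟶ ((Ext R C (i + 1)).obj (op X)).obj S.X₁ :=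
  (extIso R i X S.X₃).hom ≫ (homShortComplex_shortExact X hS).δ i (i + 1) rfl ≫
    (extIso R (i + 1) X S.X₁).inv

theorem extδ_naturality {X X' : C} (f : X ⟶ X') {S : ShortComplex C} (hS : S.ShortExact)
    (i : ℕ) :
    ((Ext R C i).map f.op).app S.X₃ ≫ extδ R X hS i =
      extδ R X' hS i ≫ ((Ext R C (i + 1)).map f.op).app S.X₁ := by
  let φ := ProjectiveResolution.lift f (projectiveResolution X) (projectiveResolution X')
  have hφ : φ.f 0 ≫ (projectiveResolution X').π.f 0 = (projectiveResolution X).π.f 0 ≫ f :=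
    ProjectiveResolution.lift_commutes_zero f _ _
  let Φ : homShortComplex R X' S ⟶ homShortComplex R X S :=
    { τ₁ := homComplexPrecomp R φ S.X₁
      τ₂ := homComplexPrecomp R φ S.X₂
      τ₃ := homComplexPrecomp R φ S.X₃
      comm₁₂ := homComplexPrecomp_comp_homComplexMap φ S.f
      comm₂₃ := homComplexPrecomp_comp_homComplexMap φ S.g }
  have hδ := HomologicalComplex.HomologySequence.δ_naturality Φ
    (homShortComplex_shortExact X' hS) (homShortComplex_shortExact X hS) i (i + 1) rfl
  have h₁ : CommSq (extIso R (i + 1) X' S.X₁).hom _ _ (extIso R (i + 1) X S.X₁).hom :=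
    ⟨(extIso_naturality_left (i + 1) f φ hφ S.X₁).symm⟩
  exact ((CommSq.mk (extIso_naturality_left i f φ hφ S.X₃)).vert_comp
    ((CommSq.mk hδ.symm).vert_comp h₁.horiz_inv.flip)).w

theorem extδ_comp_extIso_hom (X : C) {S : ShortComplex C} (hS : S.ShortExact) (i : ℕ) :
    extδ R X hS i ≫ (extIso R (i + 1) X S.X₁).hom =
      (extIso R i X S.X₃).hom ≫ (homShortComplex_shortExact X hS).δ i (i + 1) rfl :=
  (Category.assoc _ _ _).trans (congrArg _ ((Iso.comp_inv_eq _).1 rfl).symm)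

theorem exact_of_commSq {P Q S P' Q' S' : ModuleCat.{v} R} {f : P ⟶ Q} {g : Q ⟶ S}
    {f' : P' ⟶ Q'} {g' : Q' ⟶ S'} {a : P ≅ P'} {b : Q ≅ Q'} {c : S ≅ S'}
    (h₁ : CommSq f a.hom b.hom f') (h₂ : CommSq g b.hom c.hom g')
    (h : Function.Exact f'.hom g'.hom) : Function.Exact f.hom g.hom :=
  Function.Exact.of_ladder_linearEquiv_of_exact (e₁ := a.symm.toLinearEquiv)
    (e₂ := b.symm.toLinearEquiv) (e₃ := c.symm.toLinearEquiv)
    (congrArg ModuleCat.Hom.hom h₁.vert_inv.w') (congrArg ModuleCat.Hom.hom h₂.vert_inv.w') h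

section LongExactSequence

variable (i : ℕ) (X : C) {S : ShortComplex C}

theorem exact_ext_map_map (hS : S.ShortExact) :
    Function.Exact (((Ext R C i).obj (op X)).map S.f).hom
      (((Ext R C i).obj (op X)).map S.g).hom :=
  exact_of_commSq ⟨extIso_naturality i X S.f⟩ ⟨extIso_naturality i X S.g⟩
    ((ShortComplex.ShortExact.moduleCat_exact_iff_function_exact _).1
      ((homShortComplex_shortExact X hS).homology_exact₂ i))

theorem exact_ext_map_extδ (hS : S.ShortExact) :
    Function.Exact (((Ext R C i).obj (op X)).map S.g).hom (extδ R X hS i).hom :=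
  exact_of_commSq (c := extIso R (i + 1) X S.X₁) ⟨extIso_naturality i X S.g⟩
    ⟨extδ_comp_extIso_hom X hS i⟩
    ((ShortComplex.ShortExact.moduleCat_exact_iff_function_exact _).1
      ((homShortComplex_shortExact X hS).homology_exact₃ i (i + 1) rfl))

theorem exact_extδ_ext_map (hS : S.ShortExact) :
    Function.Exact (extδ R X hS i).hom (((Ext R C (i + 1)).obj (op X)).map S.f).hom :=
  exact_of_commSq (a := extIso R i X S.X₃) ⟨extδ_comp_extIso_hom X hS i⟩
    ⟨extIso_naturality (i + 1) X S.f⟩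
    ((ShortComplex.ShortExact.moduleCat_exact_iff_function_exact _).1
      ((homShortComplex_shortExact X hS).homology_exact₁ i (i + 1) rfl))

end LongExactSequence

theorem isZero_ext_of_injective (i : ℕ) (X Y : C) [Injective Y] :
    IsZero (((Ext R C (i + 1)).obj (op X)).obj Y) := by
  refine IsZero.of_iso ?_ (extIso R (i + 1) X Y)
  rw [← HomologicalComplex.exactAt_iff_isZero_homology,
    HomologicalComplex.exactAt_iff' _ i (i + 1) (i + 2) (by simp) (by simp),
    ShortComplex.ShortExact.moduleCat_exact_iff_function_exact]
  refine fun x ↦ ⟨fun hx ↦ ?_, ?_⟩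
  · have he := (projectiveResolution X).exact_succ i
    exact ⟨he.descToInjective (show (projectiveResolution X).complex.X (i + 1) ⟶ Y from x) hx,
      he.comp_descToInjective _ hx⟩
  · rintro ⟨y, rfl⟩
    exact ConcreteCategory.congr_hom ((homComplex R X Y).d_comp_d i (i + 1) (i + 2)) y

instance (Y : C) : PreservesLimits ((linearYoneda R C).obj Y) := by
  have : PreservesLimits ((linearYoneda R C).obj Y ⋙ forget (ModuleCat R)) :=
    inferInstanceAs (PreservesLimits (yoneda.obj Y))
  exact preservesLimits_of_reflects_of_preserves _ (forget (ModuleCat R))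

instance (Y : C) : PreservesFiniteColimits ((linearYoneda R C).obj Y).rightOp :=
  preservesFiniteColimits_rightOp _

theorem leftDerived_comp_fromLeftDerivedZero {D : Type*} [Category* D] [Abelian D] {F G : C ⥤ D}
    [F.Additive] [G.Additive] (α : F ⟶ G) :
    NatTrans.leftDerived α 0 ≫ G.fromLeftDerivedZero = F.fromLeftDerivedZero ≫ α := by
  ext X
  let P := projectiveResolution X
  have h : HomologicalComplex.opcyclesMap ((NatTrans.mapHomologicalComplex α _).app P.complex) 0 ≫
      P.fromLeftDerivedZero' G = P.fromLeftDerivedZero' F ≫ α.app X := by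
    rw [← cancel_epi (HomologicalComplex.pOpcycles _ _)]
    simp only [HomologicalComplex.p_opcyclesMap_assoc,
      ProjectiveResolution.pOpcycles_comp_fromLeftDerivedZero',
      ProjectiveResolution.pOpcycles_comp_fromLeftDerivedZero'_assoc]
    exact (α.naturality (P.π.f 0)).symm
  have hι := HomologicalComplex.homologyι_naturality
    ((NatTrans.mapHomologicalComplex α _).app P.complex) 0
  simp only [NatTrans.comp_app, P.fromLeftDerivedZero_eq, P.leftDerived_app_eq, Category.assoc,
    Iso.inv_hom_id_assoc]
  exact congrArg ((P.isoLeftDerivedObj F 0).hom ≫ ·)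
    ((CommSq.mk hι).vert_comp (CommSq.mk h)).w

variable (R) in
/-- The natural isomorphism `Hom(X, Y) ≅ Ext⁰(X, Y)`. -/
def homIsoExtZero (X Y : C) : ModuleCat.of R (X ⟶ Y) ≅ ((Ext R C 0).obj (op X)).obj Y :=
  (((linearYoneda R C).obj Y).rightOp.leftDerivedZeroIsoSelf.app X).unop

theorem homIsoExtZero_naturality_left {X X' : C} (f : X ⟶ X') (Y : C) :
    ModuleCat.ofHom (Linear.leftComp R Y f) ≫ (homIsoExtZero R X Y).hom =
      (homIsoExtZero R X' Y).hom ≫ ((Ext R C 0).map f.op).app Y :=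
  congrArg Quiver.Hom.unop
    (((linearYoneda R C).obj Y).rightOp.leftDerivedZeroIsoSelf.hom.naturality f).symm

theorem homIsoExtZero_naturality (X : C) {Y Y' : C} (f : Y ⟶ Y') :
    ModuleCat.ofHom (Linear.rightComp R X f) ≫ (homIsoExtZero R X Y').hom =
      (homIsoExtZero R X Y).hom ≫ ((Ext R C 0).obj (op X)).map f :=
  congrArg (fun α ↦ Quiver.Hom.unop (NatTrans.app α X))
    (leftDerived_comp_fromLeftDerivedZero (NatTrans.rightOp ((linearYoneda R C).map f))).symm

instance (i : ℕ) (X : C) : ((Ext R C i).obj (op X)).Additive where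
  map_add {Y Y' f g} := by
    have h : homComplexMap R X (f + g) = homComplexMap R X f + homComplexMap R X g := by
      ext j (x : (projectiveResolution X).complex.X j ⟶ Y) : 3
      exact Preadditive.comp_add _ _ _ x f g
    rw [← cancel_mono (extIso R i X Y').hom, Preadditive.add_comp]
    simp only [extIso_naturality, ← Preadditive.comp_add, h, HomologicalComplex.homologyMap_add]

end Ext

section ExtLinear

variable {R : Type*} [CommRing R] {C : Type u} [Category.{v} C] [Abelian C] [Linear R C]

theorem homologyMap_smul {ι : Type*} {c : ComplexShape ι} {D : Type*} [Category* D] [Abelian D]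
    [Linear R D] {K L : HomologicalComplex D c} (r : R) (f : K ⟶ L) (i : ι) :
    HomologicalComplex.homologyMap (r • f) i = r • HomologicalComplex.homologyMap f i :=
  ShortComplex.homologyMap_smul (a := r)
    (φ := (HomologicalComplex.shortComplexFunctor _ _ i).map f)

variable [EnoughProjectives C]

instance (i : ℕ) (X : C) : ((Ext R C i).obj (op X)).Linear R where
  map_smul {Y Y'} f r := by
    have h : homComplexMap R X (r • f) = r • homComplexMap R X f := by
      ext j (x : (projectiveResolution X).complex.X j ⟶ Y) : 3
      exact Linear.comp_smul _ _ _ x r f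
    rw [← cancel_mono (extIso R i X Y').hom, Linear.smul_comp]
    simp only [extIso_naturality, ← Linear.comp_smul, h, homologyMap_smul]

theorem ext_map_smul_id_app (i : ℕ) (X Y : C) (r : R) :
    ((Ext R C i).map (r • 𝟙 X).op).app Y = r • 𝟙 (((Ext R C i).obj (op X)).obj Y) := by
  have h : homComplexPrecomp R (r • 𝟙 (projectiveResolution X).complex) Y = r • 𝟙 _ := by
    ext j (x : (projectiveResolution X).complex.X j ⟶ Y) : 3
    exact (Linear.smul_comp _ _ _ r (𝟙 _) x).trans (congrArg (r • ·) (Category.id_comp x))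
  have hr : (r • 𝟙 (projectiveResolution X).complex : _ ⟶ _).f 0 ≫
      (projectiveResolution X).π.f 0 = (projectiveResolution X).π.f 0 ≫ (r • 𝟙 X) :=
    (Linear.smul_comp _ _ _ r (𝟙 _) _).trans <| (congrArg (r • ·)
      ((Category.id_comp _).trans (Category.comp_id _).symm)).trans (Linear.comp_smul ..).symm
  rw [← cancel_mono (extIso R i X Y).hom, extIso_naturality_left i (r • 𝟙 X) _ hr, h,
    homologyMap_smul]
  simp

end ExtLinear

/-! ## Local cohomology as a colimit of `Ext` -/

section FilteredColimit

variable {R : Type*} [Ring R] {J : Type*} [Category* J] [IsFiltered J]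
  [PreservesColimitsOfShape J (forget (ModuleCat.{u} R))] {F G K : J ⥤ ModuleCat.{u} R}

theorem exists_map_eq_zero_of_isColimit {c : Cocone F} (hc : IsColimit c) {j : J} {x : F.obj j}
    (hx : (c.ι.app j).hom x = 0) : ∃ (k : J) (f : j ⟶ k), (F.map f).hom x = 0 := by
  obtain ⟨k, f, f', h⟩ := Concrete.isColimit_exists_of_rep_eq F hc x (0 : F.obj j)
    (hx.trans (map_zero (c.ι.app j).hom).symm)
  exact ⟨k, f, h.trans (map_zero (F.map f').hom)⟩

theorem exact_of_isColimit {cF : Cocone F} {cG : Cocone G} {cK : Cocone K} (hF : IsColimit cF)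
    (hG : IsColimit cG) (hK : IsColimit cK) {α : F ⟶ G} {β : G ⟶ K} {f : cF.pt ⟶ cG.pt}
    {g : cG.pt ⟶ cK.pt} (hf : ∀ j, cF.ι.app j ≫ f = α.app j ≫ cG.ι.app j)
    (hg : ∀ j, cG.ι.app j ≫ g = β.app j ≫ cK.ι.app j)
    (h : ∀ j, Function.Exact (α.app j).hom (β.app j).hom) : Function.Exact f.hom g.hom := by
  intro y
  constructor
  · intro hy
    obtain ⟨j, x, rfl⟩ := Concrete.isColimit_exists_rep G hG y
    have hβ : (cK.ι.app j).hom ((β.app j).hom x) = 0 :=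
      (ConcreteCategory.congr_hom (hg j) x).symm.trans hy
    obtain ⟨k, a, ha⟩ := exists_map_eq_zero_of_isColimit hK hβ
    obtain ⟨z, hz⟩ := (h k ((G.map a).hom x)).1
      ((ConcreteCategory.congr_hom (β.naturality a) x).trans ha)
    refine ⟨(cF.ι.app k).hom z, (ConcreteCategory.congr_hom (hf k) z).trans ?_⟩
    exact (congrArg (cG.ι.app k).hom hz).trans (ConcreteCategory.congr_hom (cG.w a) x)
  · rintro ⟨x, rfl⟩
    obtain ⟨j, x, rfl⟩ := Concrete.isColimit_exists_rep F hF x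
    have hz : (β.app j).hom ((α.app j).hom x) = 0 := (h j).apply_apply_eq_zero x
    calc g.hom (f.hom ((cF.ι.app j).hom x))
        = g.hom ((cG.ι.app j).hom ((α.app j).hom x)) :=
          congrArg g.hom (ConcreteCategory.congr_hom (hf j) x)
      _ = (cK.ι.app j).hom ((β.app j).hom ((α.app j).hom x)) :=
          ConcreteCategory.congr_hom (hg j) _
      _ = 0 := by rw [hz, map_zero]

end FilteredColimit

section LocalCohomology

variable {R : Type u} [CommRing R] (I : Ideal R) (i : ℕ)

instance : PreservesColimitsOfShape (ℕᵒᵖ)ᵒᵖ (forget (ModuleCat.{u} R)) :=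
  have : PreservesFilteredColimitsOfSize.{0, 0} (forget (ModuleCat.{u} R)) :=
    preservesFilteredColimitsOfSize_shrink.{0, u, 0, u} _
  PreservesFilteredColimitsOfSize.preserves_filtered_colimits _

/-- The quotient `R ⧸ I ^ t`, as it occurs in the direct system defining local cohomology. -/
abbrev powQuotient (t : (ℕᵒᵖ)ᵒᵖ) : ModuleCat.{u} R :=
  (localCohomology.ringModIdeals (localCohomology.idealPowersDiagram I)).obj (unop t)

/-- The local cohomology module `Hⁱ_I(N)` of an unbundled module `N`. -/
abbrev H (N : Type u) [AddCommGroup N] [Module R N] : Type u :=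
  (localCohomology I i).obj (ModuleCat.of R N)

namespace H

variable {N N' N'' : Type u} [AddCommGroup N] [Module R N] [AddCommGroup N'] [Module R N']
  [AddCommGroup N''] [Module R N'']

/-- The map `Hⁱ_I(N) → Hⁱ_I(N')` induced by `f : N → N'`. -/
def map (f : N →ₗ[R] N') : H I i N →ₗ[R] H I i N' :=
  ((localCohomology I i).map (ModuleCat.ofHom f)).hom

/-- The direct system `t ↦ Extⁱ(R ⧸ I ^ t, N)`. -/
abbrev extDiagram (N : ModuleCat.{u} R) : (ℕᵒᵖ)ᵒᵖ ⥤ ModuleCat.{u} R :=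
  localCohomology.diagram (localCohomology.idealPowersDiagram I) i ⋙ (evaluation _ _).obj N

/-- The map of direct systems `Extⁱ(R ⧸ I ^ t, N) → Extⁱ(R ⧸ I ^ t, N')` induced by
`f : N ⟶ N'`. -/
abbrev extDiagramMap {N N' : ModuleCat.{u} R} (f : N ⟶ N') :
    extDiagram I i N ⟶ extDiagram I i N' :=
  Functor.whiskerLeft _ ((evaluation _ _).map f)

/-- The connecting homomorphisms `Extⁱ(R ⧸ I ^ t, S.X₃) → Extⁱ⁺¹(R ⧸ I ^ t, S.X₁)` as a map of
direct systems. -/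
def extDiagramδ {S : ShortComplex (ModuleCat.{u} R)} (hS : S.ShortExact) :
    extDiagram I i S.X₃ ⟶ extDiagram I (i + 1) S.X₁ where
  app t := extδ R (powQuotient I t) hS i
  naturality _ _ f := extδ_naturality ((localCohomology.ringModIdeals _).map f.unop) hS i

/-- The colimit cocone of the modules `Extⁱ(R ⧸ I ^ t, N)` with apex `Hⁱ_I(N)`. -/
def cocone (N : ModuleCat.{u} R) : Cocone (extDiagram I i N) :=
  ((evaluation _ _).obj N).mapCocone (colimit.cocone _)

/-- `Hⁱ_I(N)` is the direct limit of the modules `Extⁱ(R ⧸ I ^ t, N)`. -/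
def isColimit (N : ModuleCat.{u} R) : IsColimit (cocone I i N) :=
  isColimitOfPreserves _ (colimit.isColimit _)

theorem cocone_ι_app_comp_map {N N' : ModuleCat.{u} R} (f : N ⟶ N') (t : (ℕᵒᵖ)ᵒᵖ) :
    (cocone I i N).ι.app t ≫ (localCohomology I i).map f =
      (extDiagramMap I i f).app t ≫ (cocone I i N').ι.app t :=
  (((colimit.cocone (localCohomology.diagram _ i)).ι.app t).naturality f).symm

variable (N) in
/-- The canonical map `Extⁱ(R ⧸ I ^ t, N) → Hⁱ_I(N)`. -/
def ofExt (t : (ℕᵒᵖ)ᵒᵖ) :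
    ((Ext R (ModuleCat R) i).obj (op (powQuotient I t))).obj (ModuleCat.of R N) →ₗ[R] H I i N :=
  ((cocone I i (ModuleCat.of R N)).ι.app t).hom

theorem exists_ofExt_eq (x : H I i N) : ∃ t y, ofExt I i N t y = x :=
  Concrete.isColimit_exists_rep _ (isColimit I i (ModuleCat.of R N)) x

theorem map_ofExt (f : N →ₗ[R] N') (t x) :
    map I i f (ofExt I i N t x) =
      ofExt I i N' t ((((Ext R _ i).obj _).map (ModuleCat.ofHom f)).hom x) :=
  ConcreteCategory.congr_hom (cocone_ι_app_comp_map I i (ModuleCat.ofHom f) t) x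

@[simp]
theorem map_id : map I i (LinearMap.id : N →ₗ[R] N) = LinearMap.id :=
  congrArg ModuleCat.Hom.hom ((localCohomology I i).map_id (ModuleCat.of R N))

theorem map_comp (g : N' →ₗ[R] N'') (f : N →ₗ[R] N') :
    map I i (g ∘ₗ f) = map I i g ∘ₗ map I i f :=
  congrArg ModuleCat.Hom.hom
    ((localCohomology I i).map_comp (ModuleCat.ofHom f) (ModuleCat.ofHom g))

theorem map_add (f g : N →ₗ[R] N') : map I i (f + g) = map I i f + map I i g := by
  ext x
  obtain ⟨t, y, rfl⟩ := exists_ofExt_eq I i x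
  have h := ((Ext R (ModuleCat R) i).obj (op (powQuotient I t))).map_add
    (f := ModuleCat.ofHom f) (g := ModuleCat.ofHom g)
  simp only [LinearMap.add_apply, map_ofExt, ← _root_.map_add]
  exact congrArg (fun φ ↦ ofExt I i N' t (φ.hom y)) h

theorem map_smul (r : R) (f : N →ₗ[R] N') : map I i (r • f) = r • map I i f := by
  ext x
  obtain ⟨t, y, rfl⟩ := exists_ofExt_eq I i x
  have h := ((Ext R (ModuleCat R) i).obj (op (powQuotient I t))).map_smul r (ModuleCat.ofHom f)
  rw [LinearMap.smul_apply, map_ofExt, map_ofExt, ← (ofExt I i N' t).map_smul]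
  exact congrArg (fun φ ↦ ofExt I i N' t (φ.hom y)) h

/-- The connecting homomorphism of the long exact sequence of local cohomology, obtained from
those of `Extⁱ(R ⧸ I ^ t, ·)` by passing to the limit. -/
def δ {S : ShortComplex (ModuleCat.{u} R)} (hS : S.ShortExact) :
    (localCohomology I i).obj S.X₃ ⟶ (localCohomology I (i + 1)).obj S.X₁ :=
  (isColimit I i S.X₃).map (cocone I (i + 1) S.X₁) (extDiagramδ I i hS)

theorem cocone_ι_app_comp_δ {S : ShortComplex (ModuleCat.{u} R)} (hS : S.ShortExact)
    (t : (ℕᵒᵖ)ᵒᵖ) :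
    (cocone I i S.X₃).ι.app t ≫ δ I i hS =
      (extDiagramδ I i hS).app t ≫ (cocone I (i + 1) S.X₁).ι.app t :=
  (isColimit I i S.X₃).fac _ t

theorem exact_map_map {S : ShortComplex (ModuleCat.{u} R)} (hS : S.ShortExact) :
    Function.Exact ((localCohomology I i).map S.f).hom ((localCohomology I i).map S.g).hom :=
  exact_of_isColimit (α := extDiagramMap I i S.f) (β := extDiagramMap I i S.g)
    (isColimit I i _) (isColimit I i _) (isColimit I i _)
    (cocone_ι_app_comp_map I i _) (cocone_ι_app_comp_map I i _)
    fun t ↦ exact_ext_map_map i (powQuotient I t) hS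

theorem exact_map_δ {S : ShortComplex (ModuleCat.{u} R)} (hS : S.ShortExact) :
    Function.Exact ((localCohomology I i).map S.g).hom (δ I i hS).hom :=
  exact_of_isColimit (α := extDiagramMap I i S.g) (β := extDiagramδ I i hS)
    (isColimit I i _) (isColimit I i _) (isColimit I (i + 1) _)
    (cocone_ι_app_comp_map I i _) (cocone_ι_app_comp_δ I i hS)
    fun t ↦ exact_ext_map_extδ i (powQuotient I t) hS

theorem exact_δ_map {S : ShortComplex (ModuleCat.{u} R)} (hS : S.ShortExact) :
    Function.Exact (δ I i hS).hom ((localCohomology I (i + 1)).map S.f).hom :=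
  exact_of_isColimit (α := extDiagramδ I i hS) (β := extDiagramMap I (i + 1) S.f)
    (isColimit I i _) (isColimit I (i + 1) _) (isColimit I (i + 1) _)
    (cocone_ι_app_comp_δ I i hS) (cocone_ι_app_comp_map I (i + 1) _)
    fun t ↦ exact_extδ_ext_map i (powQuotient I t) hS

theorem shortExact_of_exact {f : N →ₗ[R] N'} {g : N' →ₗ[R] N''} (hf : Function.Injective f)
    (h : Function.Exact f g) (hg : Function.Surjective g) :
    (ShortComplex.mk (ModuleCat.ofHom f) (ModuleCat.ofHom g)
      (ModuleCat.hom_ext h.linearMap_comp_eq_zero)).ShortExact :=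
  .mk' ((ShortComplex.ShortExact.moduleCat_exact_iff_function_exact _).2 h)
    ((ModuleCat.mono_iff_injective _).2 hf) ((ModuleCat.epi_iff_surjective _).2 hg)

theorem exists_connecting {f : N →ₗ[R] N'} {g : N' →ₗ[R] N''} (hf : Function.Injective f)
    (h : Function.Exact f g) (hg : Function.Surjective g) :
    ∃ d : H I i N'' →ₗ[R] H I (i + 1) N,
      Function.Exact (map I i f) (map I i g) ∧ Function.Exact (map I i g) d ∧
        Function.Exact d (map I (i + 1) f) :=
  have hS := shortExact_of_exact hf h hg
  ⟨(δ I i hS).hom, exact_map_map I i hS, exact_map_δ I i hS, exact_δ_map I i hS⟩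

end H
end LocalCohomology

section ZerothLocalCohomology

variable {R : Type u} [CommRing R] (I : Ideal R)

namespace H

variable {N N' N'' : Type u} [AddCommGroup N] [Module R N] [AddCommGroup N'] [Module R N']
  [AddCommGroup N''] [Module R N'']

theorem mem_primaryComponent (i : ℕ) (x : H I i N) :
    x ∈ Ideal.primaryComponent (H I i N) I := by
  obtain ⟨t, y, rfl⟩ := exists_ofExt_eq I i x
  refine (Ideal.primaryComponent_mem ..).2
    ⟨unop (unop t), (Submodule.mem_torsionBySet_iff ..).2 fun ⟨r, hr⟩ ↦ ?_⟩
  have hQ : r • 𝟙 (powQuotient I t) = 0 := by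
    ext z
    obtain ⟨z, rfl⟩ := Submodule.mkQ_surjective (I ^ unop (unop t)) z
    exact (Submodule.Quotient.mk_eq_zero _).2 (Ideal.mul_mem_right z _ hr)
  have h : r • 𝟙 (((Ext R _ i).obj (op (powQuotient I t))).obj (ModuleCat.of R N)) = 0 := by
    rw [← ext_map_smul_id_app, hQ, ← zero_smul R (𝟙 _), ext_map_smul_id_app, zero_smul]
  rw [← (ofExt I i N t).map_smul]
  exact (congrArg (ofExt I i N t) (ConcreteCategory.congr_hom h y)).trans (_root_.map_zero _)

theorem subsingleton_of_injective (i : ℕ) [Module.Injective R N] :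
    Subsingleton (H I (i + 1) N) := by
  have : Injective (ModuleCat.of R N) := Module.injective_object_of_injective_module R N
  refine subsingleton_of_forall_eq 0 fun x ↦ ?_
  obtain ⟨t, y, rfl⟩ := exists_ofExt_eq I (i + 1) x
  have := ModuleCat.subsingleton_of_isZero
    (isZero_ext_of_injective (R := R) i (powQuotient I t) (ModuleCat.of R N))
  rw [Subsingleton.elim y 0, _root_.map_zero]

variable (N) in
/-- The canonical map `Ext⁰(R ⧸ I ^ t, N) ≅ Hom(R ⧸ I ^ t, N) → N` evaluating a homomorphism
at `1`. -/
def extZeroEval (t : (ℕᵒᵖ)ᵒᵖ) :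
    ((Ext R (ModuleCat R) 0).obj (op (powQuotient I t))).obj (ModuleCat.of R N) ⟶
      ModuleCat.of R N :=
  (homIsoExtZero R (powQuotient I t) (ModuleCat.of R N)).inv ≫
    ModuleCat.ofHom ((LinearMap.applyₗ (R := R) (Submodule.mkQ (I ^ unop (unop t)) 1)).comp
      (ModuleCat.homLinearEquiv (S := R)).toLinearMap)

theorem extZeroEval_homIsoExtZero (t : (ℕᵒᵖ)ᵒᵖ) (φ : powQuotient I t ⟶ ModuleCat.of R N) :
    (extZeroEval I N t).hom ((homIsoExtZero R _ _).hom φ) =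
      φ.hom (Submodule.mkQ (I ^ unop (unop t)) 1) :=
  congrArg (fun ψ : powQuotient I t ⟶ _ ↦ ψ.hom (Submodule.mkQ (I ^ unop (unop t)) 1))
    (ConcreteCategory.congr_hom (homIsoExtZero R _ _).hom_inv_id φ)

theorem exists_homIsoExtZero_eq {X Y : ModuleCat.{u} R}
    (x : ((Ext R (ModuleCat R) 0).obj (op X)).obj Y) : ∃ φ, (homIsoExtZero R X Y).hom φ = x :=
  ⟨_, ConcreteCategory.congr_hom (homIsoExtZero R X Y).inv_hom_id x⟩

theorem extZeroEval_injective (t : (ℕᵒᵖ)ᵒᵖ) : Function.Injective (extZeroEval I N t).hom := by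
  intro x y h
  obtain ⟨φ, rfl⟩ := exists_homIsoExtZero_eq x
  obtain ⟨ψ, rfl⟩ := exists_homIsoExtZero_eq y
  rw [extZeroEval_homIsoExtZero, extZeroEval_homIsoExtZero] at h
  have hφψ : φ.hom.comp (Submodule.mkQ (I ^ unop (unop t))) =
      ψ.hom.comp (Submodule.mkQ (I ^ unop (unop t))) := LinearMap.ext_ring h
  rw [ModuleCat.hom_ext ((LinearMap.cancel_right (Submodule.mkQ_surjective _)).1 hφψ)]

theorem extZeroEval_naturality (t : (ℕᵒᵖ)ᵒᵖ) (f : N →ₗ[R] N') :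
    ((Ext R (ModuleCat R) 0).obj (op (powQuotient I t))).map (ModuleCat.ofHom f) ≫
      extZeroEval I N' t = extZeroEval I N t ≫ ModuleCat.ofHom f := by
  ext x
  obtain ⟨φ, rfl⟩ := exists_homIsoExtZero_eq x
  have h := ConcreteCategory.congr_hom
    (homIsoExtZero_naturality (R := R) (powQuotient I t) (ModuleCat.ofHom f)) φ
  exact (congrArg (extZeroEval I N' t).hom h.symm).trans ((extZeroEval_homIsoExtZero ..).trans
    (congrArg f (extZeroEval_homIsoExtZero ..)).symm)

variable (N) in
/-- The maps `extZeroEval` as a cocone. -/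
def extZeroEvalCocone : Cocone (extDiagram I 0 (ModuleCat.of R N)) where
  pt := ModuleCat.of R N
  ι :=
    { app := extZeroEval I N
      naturality s t a := by
        ext x
        obtain ⟨φ, rfl⟩ := exists_homIsoExtZero_eq x
        have h := ConcreteCategory.congr_hom (homIsoExtZero_naturality_left (R := R)
          ((localCohomology.ringModIdeals (localCohomology.idealPowersDiagram I)).map a.unop)
          (ModuleCat.of R N)) φ
        exact (congrArg (extZeroEval I N t).hom h.symm).trans
          ((extZeroEval_homIsoExtZero ..).trans (extZeroEval_homIsoExtZero I s φ).symm) }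

variable (N) in
/-- The canonical map `H⁰_I(N) → N`, whose image consists of the elements annihilated by a power
of `I`. -/
def zeroToModule : H I 0 N →ₗ[R] N :=
  ((isColimit I 0 (ModuleCat.of R N)).desc (extZeroEvalCocone I N)).hom

theorem zeroToModule_ofExt (t : (ℕᵒᵖ)ᵒᵖ) (x) :
    zeroToModule I N (ofExt I 0 N t x) = (extZeroEval I N t).hom x :=
  ConcreteCategory.congr_hom ((isColimit I 0 (ModuleCat.of R N)).fac (extZeroEvalCocone I N) t) x

theorem zeroToModule_injective : Function.Injective (zeroToModule I N) := by
  rw [injective_iff_map_eq_zero]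
  intro x hx
  obtain ⟨t, y, rfl⟩ := exists_ofExt_eq I 0 x
  rw [zeroToModule_ofExt] at hx
  rw [(injective_iff_map_eq_zero _).1 (extZeroEval_injective I t) y hx, _root_.map_zero]

theorem zeroToModule_map (f : N →ₗ[R] N') (x : H I 0 N) :
    zeroToModule I N' (map I 0 f x) = f (zeroToModule I N x) := by
  obtain ⟨t, y, rfl⟩ := exists_ofExt_eq I 0 x
  rw [map_ofExt, zeroToModule_ofExt, zeroToModule_ofExt]
  exact ConcreteCategory.congr_hom (extZeroEval_naturality I t f) y

theorem exists_zeroToModule_eq {y : N} (hy : y ∈ Ideal.primaryComponent N I) :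
    ∃ x, zeroToModule I N x = y := by
  obtain ⟨k, hk⟩ := (Ideal.primaryComponent_mem ..).1 hy
  rw [Submodule.mem_torsionBySet_iff] at hk
  let φ : powQuotient I (op (op k)) ⟶ ModuleCat.of R N := ModuleCat.ofHom
    ((I ^ k).liftQ (LinearMap.toSpanSingleton R N y) fun r hr ↦ hk ⟨r, hr⟩)
  refine ⟨ofExt I 0 N (op (op k)) ((homIsoExtZero R _ _).hom φ), ?_⟩
  rw [zeroToModule_ofExt, extZeroEval_homIsoExtZero]
  exact one_smul R y

end H

end ZerothLocalCohomology

section LocalCohomologySequences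

variable {R : Type u} [CommRing R] (I : Ideal R)

section Torsion

variable {I} {N : Type*} [AddCommGroup N] [Module R N]

theorem mem_primaryComponent_iff_exists_le_torsionOf {y : N} :
    y ∈ Ideal.primaryComponent N I ↔ ∃ k, I ^ k ≤ Ideal.torsionOf R N y := by
  simp only [Ideal.primaryComponent_mem, Submodule.mem_torsionBySet_iff, SetLike.le_def,
    Ideal.mem_torsionOf_iff, SetLike.coe_sort_coe, Subtype.forall]

theorem mem_primaryComponent_of_le_radical [IsNoetherianRing R] {y : N}
    (hy : I ≤ (Ideal.torsionOf R N y).radical) : y ∈ Ideal.primaryComponent N I :=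
  mem_primaryComponent_iff_exists_le_torsionOf.2
    (Ideal.exists_pow_le_of_le_radical_of_fg hy I.fg_of_isNoetherianRing)

theorem eq_zero_of_mem_primaryComponent {x : R} (hx : x ∈ I)
    (hr : IsSMulRegular N x) {y : N} (hy : y ∈ Ideal.primaryComponent N I) : y = 0 := by
  obtain ⟨k, hk⟩ := (Ideal.primaryComponent_mem ..).1 hy
  refine (hr.pow k).right_eq_zero_of_smul ?_
  exact (Submodule.mem_torsionBySet_iff ..).1 hk ⟨x ^ k, Ideal.pow_mem_pow hx k⟩

theorem exists_pow_le_annihilator [IsNoetherianRing R] [Module.Finite R N]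
    (hN : ∀ y : N, y ∈ Ideal.primaryComponent N I) : ∃ k, I ^ k ≤ Module.annihilator R N := by
  obtain ⟨s, hs⟩ := Module.Finite.fg_top (R := R) (M := N)
  refine Ideal.exists_pow_le_of_le_radical_of_fg (fun a ha ↦ ?_) I.fg_of_isNoetherianRing
  choose k hk using fun y ↦ mem_primaryComponent_iff_exists_le_torsionOf.1 (hN y)
  refine ⟨s.sup k, ?_⟩
  rw [← Submodule.annihilator_top, ← hs, Submodule.mem_annihilator_span]
  rintro ⟨y, hy⟩
  exact (Ideal.mem_torsionOf_iff y _).1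
    (hk y (Ideal.pow_le_pow_right (Finset.le_sup hy) (Ideal.pow_mem_pow ha _)))

end Torsion

section Injective

variable {N : Type u} [AddCommGroup N] [Module R N]

theorem exists_extension_of_injective {M : Type u} [AddCommGroup M] [Module R M]
    [Module.Injective R N] (P Q : Submodule R M) (f : P →ₗ[R] N)
    (hf : ∀ a : P, (a : M) ∈ Q → f a = 0) :
    ∃ h : M →ₗ[R] N, (∀ a : P, h a = f a) ∧ ∀ a ∈ Q, h a = 0 := by
  let j : (P ⧸ Q.comap P.subtype) →ₗ[R] (M ⧸ Q) := Submodule.mapQ _ Q P.subtype le_rfl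
  have hj : Function.Injective j := LinearMap.ker_eq_bot.1 <|
    Submodule.ker_liftQ_eq_bot _ _ _ (by rw [LinearMap.ker_comp, Submodule.ker_mkQ])
  obtain ⟨h, hh⟩ := Module.Injective.out j hj ((Q.comap P.subtype).liftQ f hf)
  refine ⟨h ∘ₗ Q.mkQ, fun a ↦ hh (Submodule.Quotient.mk a), fun a ha ↦ ?_⟩
  rw [LinearMap.comp_apply, Submodule.mkQ_apply, (Submodule.Quotient.mk_eq_zero Q).2 ha, map_zero]

theorem injective_primaryComponent [IsNoetherianRing R] [Module.Injective R N] :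
    Module.Injective R (Ideal.primaryComponent N I) := by
  refine Module.Baer.injective fun J g ↦ ?_
  obtain ⟨k, hk⟩ : ∃ k, I ^ k ≤ Module.annihilator R (LinearMap.range g) := by
    refine exists_pow_le_annihilator fun ⟨y, hy⟩ ↦ ?_
    obtain ⟨k, hk⟩ := mem_primaryComponent_iff_exists_le_torsionOf.1 y.2
    exact mem_primaryComponent_iff_exists_le_torsionOf.2
      ⟨k, fun r hr ↦ Subtype.ext (Subtype.ext (hk hr))⟩
  have hsmul : I ^ k • (⊤ : Submodule R J) ≤ LinearMap.ker g := by
    refine Submodule.smul_le.2 fun r hr a _ ↦ ?_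
    have h := Module.mem_annihilator.1 (hk hr) ⟨g a, a, rfl⟩
    rw [LinearMap.mem_ker, map_smul]
    exact congrArg Subtype.val h
  obtain ⟨c, hc⟩ := Ideal.exists_pow_inf_eq_pow_smul I J
  have hg : ∀ a : J, (a : R) ∈ I ^ (k + c) → g a = 0 := fun a ha ↦ by
    have h₁ : (a : R) ∈ I ^ (k + c) • (⊤ : Submodule R R) ⊓ J := ⟨by simpa using ha, a.2⟩
    rw [hc _ (by lia), Nat.add_sub_cancel] at h₁
    have h₂ : (a : R) ∈ (I ^ k • (⊤ : Submodule R J)).map J.subtype := by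
      rw [Submodule.map_smul'', Submodule.map_top, Submodule.range_subtype]
      exact Submodule.smul_mono le_rfl inf_le_right h₁
    obtain ⟨b, hb, hba⟩ := h₂
    rw [← Subtype.ext hba]
    exact hsmul hb
  obtain ⟨h, hJ, hI⟩ := exists_extension_of_injective J (I ^ (k + c))
    (Submodule.subtype _ ∘ₗ g) fun a ha ↦ congrArg Subtype.val (hg a ha)
  have hmem : ∀ a, h a ∈ Ideal.primaryComponent N I := fun a ↦
    mem_primaryComponent_iff_exists_le_torsionOf.2 ⟨k + c, fun r hr ↦ by
      rw [Ideal.mem_torsionOf_iff, ← map_smul]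
      exact hI _ (Ideal.mul_mem_right a _ hr)⟩
  exact ⟨h.codRestrict _ hmem, fun a ha ↦ Subtype.ext (hJ ⟨a, ha⟩)⟩

theorem exists_injective_embedding_of_torsion [IsNoetherianRing R]
    (hN : ∀ y : N, y ∈ Ideal.primaryComponent N I) :
    ∃ (E : ModuleCat.{u} R) (f : N →ₗ[R] E), Module.Injective R E ∧ Function.Injective f ∧
      ∀ y : E, y ∈ Ideal.primaryComponent E I := by
  let J := Injective.under (ModuleCat.of R N)
  have : Injective (ModuleCat.of R (J : Type u)) :=
    inferInstanceAs (Injective (Injective.under (ModuleCat.of R N)))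
  have : Module.Injective R J := Module.injective_module_of_injective_object R J
  let j : N →ₗ[R] J := (Injective.ι (ModuleCat.of R N)).hom
  have hj : Function.Injective j := (ModuleCat.mono_iff_injective _).1 (Injective.ι_mono _)
  refine ⟨ModuleCat.of R (Ideal.primaryComponent J I),
    j.codRestrict _ fun x ↦ Ideal.primaryComponent_map_mem I j ⟨x, hN x⟩,
    injective_primaryComponent I, fun x y h ↦ hj (congrArg Subtype.val h), fun y ↦ ?_⟩
  obtain ⟨k, hk⟩ := mem_primaryComponent_iff_exists_le_torsionOf.1 y.2
  exact mem_primaryComponent_iff_exists_le_torsionOf.2 ⟨k, fun r hr ↦ Subtype.ext (hk hr)⟩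

end Injective

namespace H

variable {N N' N'' : Type u} [AddCommGroup N] [Module R N] [AddCommGroup N'] [Module R N']
  [AddCommGroup N''] [Module R N'']

/-- The isomorphism `Hⁱ_I(N) ≃ Hⁱ_I(N')` induced by `e : N ≃ N'`. -/
def congr (i : ℕ) (e : N ≃ₗ[R] N') : H I i N ≃ₗ[R] H I i N' :=
  .ofLinearMap (map I i e.toLinearMap) (map I i e.symm.toLinearMap)
    (by rw [← map_comp, LinearEquiv.comp_symm, map_id])
    (by rw [← map_comp, LinearEquiv.symm_comp, map_id])

section ShortExact

variable {I} {f : N →ₗ[R] N'} {g : N' →ₗ[R] N''}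

theorem subsingleton_middle (i : ℕ) [Subsingleton (H I i N)] [Subsingleton (H I i N'')]
    (hf : Function.Injective f) (h : Function.Exact f g) (hg : Function.Surjective g) :
    Subsingleton (H I i N') := by
  obtain ⟨_, hfg, -, -⟩ := exists_connecting I i hf h hg
  refine subsingleton_of_forall_eq 0 fun x ↦ ?_
  obtain ⟨y, rfl⟩ := (hfg x).1 (Subsingleton.elim _ _)
  rw [Subsingleton.elim y 0, _root_.map_zero]

theorem subsingleton_left (i : ℕ) [Subsingleton (H I i N'')] [Subsingleton (H I (i + 1) N')]
    (hf : Function.Injective f) (h : Function.Exact f g) (hg : Function.Surjective g) :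
    Subsingleton (H I (i + 1) N) := by
  obtain ⟨_, -, -, hδf⟩ := exists_connecting I i hf h hg
  refine subsingleton_of_forall_eq 0 fun x ↦ ?_
  obtain ⟨y, rfl⟩ := (hδf x).1 (Subsingleton.elim _ _)
  rw [Subsingleton.elim y 0, _root_.map_zero]

theorem map_surjective (i : ℕ) [Subsingleton (H I (i + 1) N)] (hf : Function.Injective f)
    (h : Function.Exact f g) (hg : Function.Surjective g) : Function.Surjective (map I i g) := by
  obtain ⟨_, -, hgδ, -⟩ := exists_connecting I i hf h hg
  exact fun x ↦ (hgδ x).1 (Subsingleton.elim _ _)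

theorem nonempty_ker_map_equiv (i : ℕ) [Subsingleton (H I i N')] (hf : Function.Injective f)
    (h : Function.Exact f g) (hg : Function.Surjective g) :
    Nonempty (H I i N'' ≃ₗ[R] LinearMap.ker (map I (i + 1) f)) := by
  obtain ⟨d, -, hgδ, hδf⟩ := exists_connecting I i hf h hg
  have hd : Function.Injective d := by
    rw [injective_iff_map_eq_zero]
    intro x hx
    obtain ⟨y, rfl⟩ := (hgδ x).1 hx
    rw [Subsingleton.elim y 0, _root_.map_zero]
  rw [LinearMap.exact_iff.1 hδf]
  exact ⟨LinearEquiv.ofInjective d hd⟩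

theorem nonempty_equiv (i : ℕ) [Subsingleton (H I i N')] [Subsingleton (H I (i + 1) N')]
    (hf : Function.Injective f) (h : Function.Exact f g) (hg : Function.Surjective g) :
    Nonempty (H I i N'' ≃ₗ[R] H I (i + 1) N) := by
  obtain ⟨e⟩ := nonempty_ker_map_equiv (I := I) i hf h hg
  rw [LinearMap.ker_eq_top.2 (Subsingleton.elim (map I (i + 1) f) 0)] at e
  exact ⟨e.trans Submodule.topEquiv⟩

end ShortExact

variable {I} {x : R}

theorem subsingleton_of_bijective_smul (i : ℕ) (hx : x ∈ I)
    (hb : Function.Bijective (x • · : N → N)) : Subsingleton (H I i N) := by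
  let e : N ≃ₗ[R] N := .ofBijective (x • LinearMap.id) hb
  have he : ∀ y, congr I i e y = x • y := fun y ↦ by
    change map I i (x • LinearMap.id) y = x • y
    rw [map_smul, map_id, LinearMap.smul_apply, LinearMap.id_apply]
  have hr : IsSMulRegular (H I i N) x := fun y z h ↦
    (congr I i e).injective ((he y).trans (h.trans (he z).symm))
  exact subsingleton_of_forall_eq 0 fun y ↦
    eq_zero_of_mem_primaryComponent hx hr (mem_primaryComponent I i y)

theorem subsingleton_zero_of_isSMulRegular (hx : x ∈ I) (hr : IsSMulRegular N x) :
    Subsingleton (H I 0 N) := by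
  refine subsingleton_of_forall_eq 0 fun y ↦ zeroToModule_injective I ?_
  rw [_root_.map_zero]
  exact eq_zero_of_mem_primaryComponent hx hr
    (Ideal.primaryComponent_map_mem I (zeroToModule I N) ⟨y, mem_primaryComponent I 0 y⟩)

theorem zero_map_surjective (hN : ∀ y : N, y ∈ Ideal.primaryComponent N I) {g : N →ₗ[R] N'}
    (hg : Function.Surjective g) : Function.Surjective (map I 0 g) := fun x ↦ by
  obtain ⟨y, hy⟩ := hg (zeroToModule I N' x)
  obtain ⟨z, rfl⟩ := exists_zeroToModule_eq I (hN y)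
  exact ⟨z, zeroToModule_injective I ((zeroToModule_map I g z).trans hy)⟩

theorem subsingleton_of_torsion [IsNoetherianRing R] (i : ℕ)
    (hN : ∀ y : N, y ∈ Ideal.primaryComponent N I) : Subsingleton (H I (i + 1) N) := by
  induction i generalizing N with
  | zero =>
    obtain ⟨E, f, hE, hf, hEI⟩ := exists_injective_embedding_of_torsion I hN
    obtain ⟨d, -, hgd, hdf⟩ := exists_connecting I 0 hf (LinearMap.exact_map_mkQ_range f)
      (Submodule.mkQ_surjective _)
    have := subsingleton_of_injective I 0 (N := E)
    refine subsingleton_of_forall_eq 0 fun x ↦ ?_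
    obtain ⟨y, rfl⟩ := (hdf x).1 (Subsingleton.elim _ _)
    exact (hgd y).2 (zero_map_surjective hEI (Submodule.mkQ_surjective _) y)
  | succ i ih =>
    obtain ⟨E, f, hE, hf, hEI⟩ := exists_injective_embedding_of_torsion I hN
    have := subsingleton_of_injective I (i + 1) (N := E)
    have : Subsingleton (H I (i + 1) (E ⧸ LinearMap.range f)) := ih fun y ↦ by
      obtain ⟨y, rfl⟩ := Submodule.mkQ_surjective _ y
      exact Ideal.primaryComponent_map_mem I (Submodule.mkQ _) ⟨y, hEI y⟩
    exact subsingleton_left (i + 1) hf (LinearMap.exact_map_mkQ_range f)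
      (Submodule.mkQ_surjective _)

section NumberOfGenerators

theorem le_radical_of_pow_mem {x : R} {s : Set R} {T J : Ideal R}
    (h : I ≤ (T ⊔ Ideal.span (insert x s)).radical) (hT : T ≤ J) {k : ℕ} (hx : x ^ k ∈ J) :
    I ≤ (J ⊔ Ideal.span s).radical := by
  refine h.trans ((Ideal.radical_isRadical _).radical_le_iff.2 (sup_le ?_ (Ideal.span_le.2 ?_)))
  · exact (hT.trans le_sup_left).trans Ideal.le_radical
  · exact Set.insert_subset ⟨k, le_sup_left (a := J) hx⟩
      ((Ideal.subset_span.trans (SetLike.coe_subset_coe.2 le_sup_right)).trans Ideal.le_radical)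

variable [IsNoetherianRing R]

theorem subsingleton_of_le_radical {s : Finset R} (hs : (s : Set R) ⊆ I)
    (hN : ∀ y : N, I ≤ (Ideal.torsionOf R N y ⊔ Ideal.span s).radical) {i : ℕ}
    (hi : s.card < i) : Subsingleton (H I i N) := by
  classical
  induction s using Finset.induction_on generalizing N i with
  | empty =>
    obtain ⟨i, rfl⟩ := Nat.exists_eq_add_of_lt hi
    exact subsingleton_of_torsion _ fun y ↦
      mem_primaryComponent_of_le_radical (by simpa using hN y)
  | insert x s hxs ih =>
    rw [Finset.card_insert_of_notMem hxs] at hi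
    rw [Finset.coe_insert] at hs hN
    have hsI := (Set.subset_insert x _).trans hs
    obtain ⟨i, rfl⟩ := Nat.exists_eq_add_of_lt hi
    let L := LocalizedModule (.powers x) N
    let f : N →ₗ[R] L := LocalizedModule.mkLinearMap (.powers x) N
    have : Subsingleton (H I (s.card + 1 + i + 1) L) :=
      subsingleton_of_bijective_smul _ (hs (Set.mem_insert x _)) <|
        (Module.End.isUnit_iff _).1
          (IsLocalizedModule.map_units f (⟨x, 1, pow_one x⟩ : Submonoid.powers x))
    have : Subsingleton (H I (s.card + 1 + i + 1) (LinearMap.ker f)) := by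
      refine ih hsI (fun y ↦ ?_) (by lia)
      obtain ⟨⟨_, k, rfl⟩, hk⟩ := (IsLocalizedModule.eq_zero_iff (.powers x) f).1 y.2
      exact le_radical_of_pow_mem (hN y) (fun r hr ↦ Subtype.ext hr) (Subtype.ext hk)
    have : Subsingleton (H I (s.card + 1 + i) (L ⧸ LinearMap.range f)) := by
      refine ih hsI (fun l ↦ ?_) (by lia)
      obtain ⟨l, rfl⟩ := Submodule.mkQ_surjective _ l
      obtain ⟨⟨y, m⟩, rfl⟩ := IsLocalizedModule.mk'_surjective (.powers x) f l
      obtain ⟨k, hk : x ^ k = m⟩ := m.2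
      refine le_radical_of_pow_mem (hN y) (fun r hr ↦ ?_) (k := k) ?_
      · rw [Ideal.mem_torsionOf_iff, ← _root_.map_smul, Function.uncurry_apply_pair,
          ← IsLocalizedModule.mk'_smul, (Ideal.mem_torsionOf_iff y r).1 hr,
          IsLocalizedModule.mk'_zero, _root_.map_zero]
      · rw [hk, Ideal.mem_torsionOf_iff, ← _root_.map_smul, Submodule.mkQ_apply,
          Submodule.Quotient.mk_eq_zero]
        exact ⟨y, (IsLocalizedModule.mk'_cancel' f y m).symm⟩
    have : Subsingleton (H I (s.card + 1 + i + 1) (LinearMap.range f)) :=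
      subsingleton_left (s.card + 1 + i) (LinearMap.range f).injective_subtype
        (LinearMap.exact_subtype_mkQ _) (Submodule.mkQ_surjective _)
    exact subsingleton_middle _ (LinearMap.ker f).injective_subtype
      (LinearMap.exact_iff.2 (by rw [LinearMap.ker_rangeRestrict, Submodule.range_subtype]))
      f.surjective_rangeRestrict

theorem subsingleton_of_span_eq {s : Finset R} (hs : Ideal.span s = I) {i : ℕ}
    (hi : s.card < i) : Subsingleton (H I i N) := by
  refine subsingleton_of_le_radical (hs ▸ Ideal.subset_span) (fun y ↦ ?_) hi
  rw [hs]
  exact le_sup_right.trans Ideal.le_radical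

end NumberOfGenerators

end H

end LocalCohomologySequences

/-! ## Laurent series and the local cohomology of a power series ring -/

section Laurent

variable {σ A : Type*} [CommRing A]

/-- The inclusion `ℕ^σ → ℤ^σ` of the exponents of power series into those of Laurent series. -/
def intExponent : (σ →₀ ℕ) →+ (σ → ℤ) where
  toFun v i := v i
  map_zero' := by ext; simp
  map_add' v w := by ext; simp

@[simp]
theorem intExponent_apply (v : σ →₀ ℕ) (i : σ) : intExponent v i = v i := rfl

theorem intExponent_le_iff (v w : σ →₀ ℕ) : intExponent v ≤ intExponent w ↔ v ≤ w := by
  simp [Pi.le_def, Finsupp.le_def]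

theorem intExponent_injective : Function.Injective (intExponent (σ := σ)) := fun v w h ↦
  le_antisymm ((intExponent_le_iff v w).1 h.le) ((intExponent_le_iff w v).1 h.ge)

variable [Finite σ]

theorem exists_intExponent_eq {u : σ → ℤ} : (∃ v, intExponent v = u) ↔ 0 ≤ u := by
  refine ⟨?_, fun h ↦ ⟨Finsupp.equivFunOnFinite.symm fun i ↦ (u i).toNat, ?_⟩⟩
  · rintro ⟨v, rfl⟩ i
    simp
  · ext i
    simpa using h i

/-- Power series as Hahn series in the variables `σ` with integer exponents. -/
def ofPowerSeries : MvPowerSeries σ A →+* HahnSeries (σ → ℤ) A :=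
  (HahnSeries.embDomainRingHom intExponent intExponent_injective intExponent_le_iff).comp
    (HahnSeries.toMvPowerSeries (σ := σ) (R := A)).symm.toRingHom

theorem coeff_ofPowerSeries_intExponent (r : MvPowerSeries σ A) (v : σ →₀ ℕ) :
    (ofPowerSeries r).coeff (intExponent v) = MvPowerSeries.coeff v r :=
  HahnSeries.embDomain_coeff
    (f := ⟨⟨intExponent, intExponent_injective⟩, intExponent_le_iff _ _⟩)

theorem exists_intExponent_eq_of_coeff_ofPowerSeries_ne_zero {r : MvPowerSeries σ A} {u : σ → ℤ}
    (h : (ofPowerSeries r).coeff u ≠ 0) : ∃ v, intExponent v = u := by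
  contrapose! h
  exact HahnSeries.embDomain_of_notMem_range
    (f := ⟨⟨intExponent, intExponent_injective⟩, intExponent_le_iff _ _⟩) fun ⟨v, hv⟩ ↦ h v hv

theorem ofPowerSeries_monomial (v : σ →₀ ℕ) (a : A) :
    ofPowerSeries (MvPowerSeries.monomial v a) = HahnSeries.single (intExponent v) a := by
  classical
  ext u
  by_cases hu : ∃ w, intExponent w = u
  · obtain ⟨w, rfl⟩ := hu
    rw [coeff_ofPowerSeries_intExponent, MvPowerSeries.coeff_monomial, HahnSeries.coeff_single]
    simp only [intExponent_injective.eq_iff]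
  · rw [HahnSeries.coeff_single_of_ne fun h ↦ hu ⟨v, h.symm⟩]
    exact not_not.1 fun h ↦ hu (exists_intExponent_eq_of_coeff_ofPowerSeries_ne_zero h)

instance : Algebra (MvPowerSeries σ A) (HahnSeries (σ → ℤ) A) := ofPowerSeries.toAlgebra

theorem smul_eq_mul_ofPowerSeries (r : MvPowerSeries σ A) (l : HahnSeries (σ → ℤ) A) :
    r • l = ofPowerSeries r * l := rfl

theorem coeff_monomial_smul (v : σ →₀ ℕ) (a : A) (l : HahnSeries (σ → ℤ) A) (u : σ → ℤ) :
    (MvPowerSeries.monomial v a • l).coeff u = a * l.coeff (u - intExponent v) := by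
  rw [smul_eq_mul_ofPowerSeries, ofPowerSeries_monomial, HahnSeries.coeff_single_mul]

theorem coeff_X_smul (j : σ) (l : HahnSeries (σ → ℤ) A) (u : σ → ℤ) :
    ((MvPowerSeries.X j : MvPowerSeries σ A) • l).coeff u =
      l.coeff (u - intExponent (.single j 1)) :=
  (coeff_monomial_smul ..).trans (one_mul _)

/-- The series whose support is contained in the upper set `W`. -/
def supportedIn (A : Type*) [CommRing A] (W : UpperSet (σ → ℤ)) :
    Submodule (MvPowerSeries σ A) (HahnSeries (σ → ℤ) A) where
  carrier := {l | ∀ u ∉ W, l.coeff u = 0}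
  zero_mem' _ _ := rfl
  add_mem' hl hm u hu := by rw [HahnSeries.coeff_add, hl u hu, hm u hu, add_zero]
  smul_mem' r l hl u hu := by
    by_contra h
    obtain ⟨a, ha, b, hb, rfl⟩ := HahnSeries.support_mul_subset (x := ofPowerSeries r) (y := l) h
    have hbW : b ∈ W := not_not.1 fun hbW ↦ hb (hl b hbW)
    have ha0 := exists_intExponent_eq.1 (exists_intExponent_eq_of_coeff_ofPowerSeries_ne_zero ha)
    exact hu (W.upper (le_add_of_nonneg_left ha0) hbW)

/-- Laurent series supported in `W` modulo those supported in `B`. Only the coefficients at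
exponents in `W \ B` matter. -/
abbrev SupportQuotient (A : Type*) [CommRing A] (W B : UpperSet (σ → ℤ)) : Type _ :=
  supportedIn A W ⧸ (supportedIn A B).submoduleOf (supportedIn A W)

namespace SupportQuotient

variable {W W' B B' : UpperSet (σ → ℤ)}

/-- The class of a series supported in `W`. -/
def mk (W B : UpperSet (σ → ℤ)) :
    supportedIn A W →ₗ[MvPowerSeries σ A] SupportQuotient A W B :=
  Submodule.mkQ _

theorem mk_surjective : Function.Surjective (mk (A := A) W B) := Submodule.mkQ_surjective _

theorem mk_eq_zero_iff {l : supportedIn A W} :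
    mk W B l = 0 ↔ ∀ u ∉ B, l.1.coeff u = 0 :=
  Submodule.Quotient.mk_eq_zero _

/-- The map induced by inclusions `W ⊆ W'` and `B ⊆ B'`. -/
def map (hW : W' ≤ W) (hB : B' ≤ B) :
    SupportQuotient A W B →ₗ[MvPowerSeries σ A] SupportQuotient A W' B' :=
  Submodule.mapQ _ _ (Submodule.inclusion fun _ hl u hu ↦ hl u fun h ↦ hu (hW h))
    fun _ hl u hu ↦ hl u fun h ↦ hu (hB h)

theorem map_mk_eq_zero_iff (hW : W' ≤ W) (hB : B' ≤ B) {l : supportedIn A W} :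
    map hW hB (mk W B l) = 0 ↔ ∀ u ∉ B', l.1.coeff u = 0 :=
  mk_eq_zero_iff (l := Submodule.inclusion _ l)

theorem map_injective (hW : W' ≤ W) :
    Function.Injective (map (A := A) hW (le_refl B)) := by
  rw [injective_iff_map_eq_zero]
  intro x hx
  obtain ⟨l, rfl⟩ := mk_surjective x
  exact mk_eq_zero_iff.2 ((map_mk_eq_zero_iff hW le_rfl).1 hx)

theorem map_surjective (hB : B' ≤ B) :
    Function.Surjective (map (A := A) (le_refl W) hB) := fun x ↦ by
  obtain ⟨l, rfl⟩ := mk_surjective x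
  exact ⟨mk W B l, rfl⟩

/-- The part of the series `l` with exponents in `W`. -/
def restrict (W : UpperSet (σ → ℤ)) (l : HahnSeries (σ → ℤ) A) : supportedIn A W :=
  ⟨⟨Set.indicator W l.coeff, l.isPWO_support.mono fun _ hu ↦
    (Set.indicator_apply_ne_zero.1 hu).2⟩, fun _ hu ↦ Set.indicator_of_notMem hu _⟩

theorem coeff_restrict (l : HahnSeries (σ → ℤ) A) :
    (restrict W l).1.coeff = Set.indicator W l.coeff := rfl

theorem exact_map_map (hW : W' ≤ W) (hB : B' ≤ B) (hWB : B' ≤ W)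
    (h : ∀ u ∈ W', u ∈ B' → u ∈ B ∨ u ∈ W) :
    Function.Exact (map (A := A) hW (le_refl B)) (map (A := A) (le_refl W') hB) := by
  refine fun x ↦ ⟨fun hx ↦ ?_, ?_⟩
  · obtain ⟨l, rfl⟩ := mk_surjective x
    rw [map_mk_eq_zero_iff] at hx
    refine ⟨mk W B (restrict W l.1), ?_⟩
    rw [← sub_eq_zero]
    refine (map_sub (mk W' B) (Submodule.inclusion _ _) l).symm.trans
      (mk_eq_zero_iff.2 fun u hu ↦ ?_)
    change ((restrict W l.1).1 - l.1).coeff u = 0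
    rw [HahnSeries.coeff_sub, coeff_restrict]
    by_cases huW : u ∈ W
    · rw [Set.indicator_of_mem huW, sub_self]
    · rw [Set.indicator_of_notMem huW, zero_sub, neg_eq_zero]
      by_contra hl
      exact (h u (not_not.1 fun h' ↦ hl (l.2 u h')) (not_not.1 fun h' ↦ hl (hx u h'))).elim hu huW
  · rintro ⟨x, rfl⟩
    obtain ⟨l, rfl⟩ := mk_surjective x
    exact mk_eq_zero_iff.2 fun u hu ↦ l.2 u fun h ↦ hu (hWB h)

theorem isSMulRegular_X {j : σ} (hB : ∀ u ∉ B, u + intExponent (.single j 1) ∉ B) :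
    IsSMulRegular (SupportQuotient A W B) (MvPowerSeries.X j : MvPowerSeries σ A) := by
  refine isSMulRegular_iff_right_eq_zero_of_smul.2 fun x hx ↦ ?_
  obtain ⟨l, rfl⟩ := mk_surjective x
  rw [← map_smul, mk_eq_zero_iff] at hx
  refine mk_eq_zero_iff.2 fun u hu ↦ ?_
  rw [← hx _ (hB u hu)]
  exact ((coeff_X_smul ..).trans (by rw [add_sub_cancel_right])).symm

theorem bijective_X_smul {j : σ} (hW : ∀ u ∉ W, u + intExponent (.single j 1) ∉ W)
    (hB : ∀ u ∉ B, u + intExponent (.single j 1) ∉ B) :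
    Function.Bijective ((MvPowerSeries.X j : MvPowerSeries σ A) • · :
      SupportQuotient A W B → SupportQuotient A W B) := by
  refine ⟨isSMulRegular_X hB, fun x ↦ ?_⟩
  obtain ⟨l, rfl⟩ := mk_surjective x
  let m : HahnSeries (σ → ℤ) A := HahnSeries.single (-intExponent (.single j 1)) 1 * l.1
  have hm (u) : m.coeff u = l.1.coeff (u + intExponent (.single j 1)) := by
    rw [HahnSeries.coeff_single_mul, one_mul, sub_neg_eq_add]
  refine ⟨mk W B ⟨m, fun u hu ↦ (hm u).trans (l.2 _ (hW u hu))⟩, ?_⟩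
  refine (map_smul (mk W B) _ _).symm.trans (congrArg (mk W B) (Subtype.ext ?_))
  ext u
  exact (coeff_X_smul ..).trans ((hm _).trans (by rw [sub_add_cancel]))

end SupportQuotient

end Laurent

section CohomologyOfPowerSeries

variable {σ A : Type u} [CommRing A]

/-- The ideal generated by the variables of the power series ring. -/
def varsIdeal (σ A : Type*) [CommRing A] : Ideal (MvPowerSeries σ A) :=
  Ideal.span (Set.range MvPowerSeries.X)

theorem X_mem_varsIdeal {σ A : Type*} [CommRing A] (j : σ) :
    (MvPowerSeries.X j : MvPowerSeries σ A) ∈ varsIdeal σ A :=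
  Ideal.subset_span ⟨j, rfl⟩

/-- The exponents that are nonnegative at all variables outside `S`. -/
def nonnegOutside (S : Finset σ) : UpperSet (σ → ℤ) :=
  ⟨{u | ∀ i ∉ S, 0 ≤ u i}, fun _ _ h hu i hi ↦ (hu i hi).trans (h i)⟩

theorem mem_nonnegOutside {S : Finset σ} {u : σ → ℤ} :
    u ∈ nonnegOutside S ↔ ∀ i ∉ S, 0 ≤ u i := Iff.rfl

/-- The exponents that are nonnegative at some variable in `S`. -/
def nonnegSomewhere (S : Finset σ) : UpperSet (σ → ℤ) :=
  ⟨{u | ∃ i ∈ S, 0 ≤ u i}, fun _ _ h ⟨i, hi, hu⟩ ↦ ⟨i, hi, hu.trans (h i)⟩⟩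

theorem mem_nonnegSomewhere {S : Finset σ} {u : σ → ℤ} :
    u ∈ nonnegSomewhere S ↔ ∃ i ∈ S, 0 ≤ u i := Iff.rfl

theorem add_intExponent_single_notMem_nonnegSomewhere {S : Finset σ} {j : σ} (hj : j ∉ S)
    {u : σ → ℤ} (hu : u ∉ nonnegSomewhere S) :
    u + intExponent (.single j 1) ∉ nonnegSomewhere S := by
  classical
  rw [mem_nonnegSomewhere] at hu ⊢
  rintro ⟨i, hi, h⟩
  refine hu ⟨i, hi, ?_⟩
  rwa [Pi.add_apply, intExponent_apply, Finsupp.single_eq_of_ne (by rintro rfl; exact hj hi),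
    Nat.cast_zero, add_zero] at h

theorem add_intExponent_single_notMem_nonnegOutside {S : Finset σ} {j : σ} (hj : j ∈ S)
    {u : σ → ℤ} (hu : u ∉ nonnegOutside S) :
    u + intExponent (.single j 1) ∉ nonnegOutside S := by
  rw [mem_nonnegOutside] at hu ⊢
  refine fun h ↦ hu fun i hi ↦ ?_
  have := h i hi
  rwa [Pi.add_apply, intExponent_apply, Finsupp.single_eq_of_ne (by rintro rfl; exact hi hj),
    Nat.cast_zero, add_zero] at this

variable [Finite σ]

/-- The module `A[[x_i : i ∉ S]][x_j⁻¹ : j ∈ S]`, in the guise of Hahn series. It is the local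
cohomology of the power series ring in degree `#S` with support in the ideal `(x_j : j ∈ S)`. -/
abbrev InverseModule (A : Type*) [CommRing A] (S : Finset σ) : Type _ :=
  SupportQuotient A (nonnegOutside S) (nonnegSomewhere S)

namespace InverseModule

theorem isSMulRegular_X {S : Finset σ} {j : σ} (hj : j ∉ S) :
    IsSMulRegular (InverseModule A S) (MvPowerSeries.X j : MvPowerSeries σ A) :=
  SupportQuotient.isSMulRegular_X fun _ ↦ add_intExponent_single_notMem_nonnegSomewhere hj

theorem nonempty_H_insert_equiv [DecidableEq σ] {S : Finset σ} {j : σ} (hj : j ∉ S) (i : ℕ) :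
    Nonempty (H (varsIdeal σ A) i (InverseModule A (insert j S)) ≃ₗ[MvPowerSeries σ A]
      H (varsIdeal σ A) (i + 1) (InverseModule A S)) := by
  have hW : nonnegOutside (insert j S) ≤ nonnegOutside S := fun u hu i hi ↦
    hu i fun h ↦ hi (Finset.mem_insert_of_mem h)
  have hB : nonnegSomewhere (insert j S) ≤ nonnegSomewhere S := fun u ⟨i, hi, hu⟩ ↦
    ⟨i, Finset.mem_insert_of_mem hi, hu⟩
  have hWB : nonnegSomewhere (insert j S) ≤ nonnegOutside S := fun u hu ↦
    ⟨j, Finset.mem_insert_self j S, hu j hj⟩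
  have hBW (u : σ → ℤ) (hu : u ∈ nonnegOutside (insert j S))
      (hu' : u ∈ nonnegSomewhere (insert j S)) :
      u ∈ nonnegSomewhere S ∨ u ∈ nonnegOutside S := by
    obtain ⟨i, hi, h⟩ := hu'
    obtain rfl | hi := Finset.mem_insert.1 hi
    · refine .inr fun k hk ↦ ?_
      obtain rfl | hki := eq_or_ne k i
      · exact h
      · exact hu k fun hk' ↦ (Finset.mem_insert.1 hk').elim hki hk
    · exact .inl ⟨i, hi, h⟩
  have (i : ℕ) : Subsingleton
      (H (varsIdeal σ A) i (SupportQuotient A (nonnegOutside (insert j S)) (nonnegSomewhere S))) :=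
    H.subsingleton_of_bijective_smul i (X_mem_varsIdeal j) <| SupportQuotient.bijective_X_smul
      (fun _ ↦ add_intExponent_single_notMem_nonnegOutside (Finset.mem_insert_self j S))
      (fun _ ↦ add_intExponent_single_notMem_nonnegSomewhere hj)
  exact H.nonempty_equiv i (SupportQuotient.map_injective hW)
    (SupportQuotient.exact_map_map hW hB hWB hBW) (SupportQuotient.map_surjective hB)

theorem nonempty_H_equiv (S : Finset σ) (i : ℕ) :
    Nonempty (H (varsIdeal σ A) i (InverseModule A S) ≃ₗ[MvPowerSeries σ A]
      H (varsIdeal σ A) (i + S.card) (InverseModule A (∅ : Finset σ))) := by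
  classical
  induction S using Finset.induction_on generalizing i with
  | empty => exact ⟨.refl _ _⟩
  | insert j S hj ih =>
    obtain ⟨e⟩ := nonempty_H_insert_equiv (A := A) hj i
    obtain ⟨e'⟩ := ih (i + 1)
    rw [Finset.card_insert_of_notMem hj, add_comm S.card, ← add_assoc]
    exact ⟨e.trans e'⟩

end InverseModule

/-- A power series regarded as a Laurent series with nonnegative exponents. -/
def toInverseModule (σ A : Type*) [CommRing A] [Finite σ] :
    MvPowerSeries σ A →ₗ[MvPowerSeries σ A] InverseModule A (∅ : Finset σ) :=
  SupportQuotient.mk _ _ ∘ₗ (Algebra.linearMap _ (HahnSeries (σ → ℤ) A)).codRestrict _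
    fun r u hu ↦ by
      contrapose! hu
      exact fun i _ ↦
        exists_intExponent_eq.1 (exists_intExponent_eq_of_coeff_ofPowerSeries_ne_zero hu) i

theorem toInverseModule_bijective : Function.Bijective (toInverseModule σ A) := by
  constructor
  · rw [injective_iff_map_eq_zero]
    intro r hr
    ext v
    rw [← coeff_ofPowerSeries_intExponent]
    exact SupportQuotient.mk_eq_zero_iff.1 hr _ (by simp [mem_nonnegSomewhere])
  · intro x
    obtain ⟨l, rfl⟩ := SupportQuotient.mk_surjective x
    refine ⟨fun v ↦ l.1.coeff (intExponent v), congrArg (SupportQuotient.mk _ _) (Subtype.ext ?_)⟩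
    ext u
    by_cases hu : ∃ v, intExponent v = u
    · obtain ⟨v, rfl⟩ := hu
      exact coeff_ofPowerSeries_intExponent _ v
    · rw [l.2 u fun h ↦ hu (exists_intExponent_eq.2 fun i ↦ h i (Finset.notMem_empty i))]
      exact not_not.1 fun h ↦ hu (exists_intExponent_eq_of_coeff_ofPowerSeries_ne_zero h)

theorem nonempty_H_inverseModule_equiv (S : Finset σ) (i : ℕ) :
    Nonempty (H (varsIdeal σ A) i (InverseModule A S) ≃ₗ[MvPowerSeries σ A]
      H (varsIdeal σ A) (i + S.card) (MvPowerSeries σ A)) := by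
  obtain ⟨e⟩ := InverseModule.nonempty_H_equiv (A := A) S i
  exact ⟨e.trans (H.congr _ _ (.ofBijective _ toInverseModule_bijective)).symm⟩

theorem subsingleton_H_self {i : ℕ} (hi : i < Nat.card σ) :
    Subsingleton (H (varsIdeal σ A) i (MvPowerSeries σ A)) := by
  have := Fintype.ofFinite σ
  rw [Nat.card_eq_fintype_card] at hi
  obtain ⟨S, -, hS⟩ := Finset.exists_subset_card_eq (s := Finset.univ) hi.le
  obtain ⟨j, -, hj⟩ := Finset.exists_mem_notMem_of_card_lt_card (s := S) (t := .univ) (hS ▸ hi)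
  obtain ⟨e⟩ := nonempty_H_inverseModule_equiv (A := A) S 0
  rw [hS, zero_add] at e
  have := H.subsingleton_zero_of_isSMulRegular (X_mem_varsIdeal j)
    (InverseModule.isSMulRegular_X (A := A) hj)
  exact e.symm.toEquiv.subsingleton

end CohomologyOfPowerSeries

/-! ## Residues -/

section Residue

variable {σ A E : Type*} [CommRing A] [AddCommGroup E] [Module (MvPowerSeries σ A) E] [Module A E]
  [IsScalarTower A (MvPowerSeries σ A) E]

section

variable {Q : Type*} [AddCommGroup Q] [Module (MvPowerSeries σ A) Q] [Module A Q]
  [IsScalarTower A (MvPowerSeries σ A) Q]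

/-- Composition with `ρ : E → A`, turning an `A⟦σ⟧`-linear map `Q → E` into an `A`-linear
functional on `Q`. -/
def residueDual (σ : Type*) {A E : Type*} [CommRing A] [AddCommGroup E]
    [Module (MvPowerSeries σ A) E] [Module A E] [IsScalarTower A (MvPowerSeries σ A) E]
    (Q : Type*) [AddCommGroup Q] [Module (MvPowerSeries σ A) Q] [Module A Q]
    [IsScalarTower A (MvPowerSeries σ A) Q] (ρ : E →ₗ[A] A) :
    (Q →ₗ[MvPowerSeries σ A] E) →ₗ[A] Module.Dual A Q where
  toFun φ := ρ ∘ₗ φ.restrictScalars A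
  map_add' _ _ := LinearMap.ext fun _ ↦ map_add ρ _ _
  map_smul' _ _ := LinearMap.ext fun _ ↦ map_smul ρ _ _

theorem residueDual_apply (ρ : E →ₗ[A] A) (φ : Q →ₗ[MvPowerSeries σ A] E) (x : Q) :
    residueDual σ Q ρ φ x = ρ (φ x) := rfl

end

/-- `ρ : E → A` is a residue if `e ↦ (r ↦ ρ (r • e))` identifies `E` with the `A`-linear functionals
on `A⟦σ⟧` that depend on finitely many coefficients only. The standard example is the coefficient
of `∏ xᵢ⁻¹` on the inverse polynomials `(∏ xᵢ⁻¹) A[xᵢ⁻¹]`. -/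
structure IsResidue (σ : Type*) {A E : Type*} [CommRing A] [AddCommGroup E]
    [Module (MvPowerSeries σ A) E] [Module A E] [IsScalarTower A (MvPowerSeries σ A) E]
    (ρ : E →ₗ[A] A) : Prop where
  injective : Function.Injective (residueDual σ (MvPowerSeries σ A) ρ)
  range_eq : LinearMap.range (residueDual σ (MvPowerSeries σ A) ρ) =
    Submodule.span A (Set.range (MvPowerSeries.coeff (R := A)))

theorem exists_pow_X_dvd_imp_of_mem_span_coeff {f : Module.Dual A (MvPowerSeries σ A)}
    (hf : f ∈ Submodule.span A (Set.range (MvPowerSeries.coeff (R := A)))) (j : σ) :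
    ∃ k, ∀ r, MvPowerSeries.X j ^ k ∣ r → f r = 0 := by
  induction hf using Submodule.span_induction with
  | mem f hf =>
    obtain ⟨v, rfl⟩ := hf
    exact ⟨v j + 1, fun r hr ↦ MvPowerSeries.X_pow_dvd_iff.1 hr v (Nat.lt_succ_self _)⟩
  | zero => exact ⟨0, fun _ _ ↦ rfl⟩
  | add f g _ _ hf hg =>
    obtain ⟨k, hk⟩ := hf
    obtain ⟨l, hl⟩ := hg
    refine ⟨k + l, fun r hr ↦ ?_⟩
    rw [LinearMap.add_apply, hk r ((pow_dvd_pow _ (Nat.le_add_right k l)).trans hr),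
      hl r ((pow_dvd_pow _ (Nat.le_add_left l k)).trans hr), add_zero]
  | smul a f _ hf =>
    obtain ⟨k, hk⟩ := hf
    exact ⟨k, fun r hr ↦ by rw [LinearMap.smul_apply, hk r hr, smul_zero]⟩

namespace IsResidue

variable {ρ : E →ₗ[A] A}

theorem eq_zero (h : IsResidue σ ρ) {e : E} (he : ∀ r : MvPowerSeries σ A, ρ (r • e) = 0) :
    e = 0 := by
  have : LinearMap.toSpanSingleton (MvPowerSeries σ A) E e = 0 :=
    h.injective (LinearMap.ext fun r ↦ by simpa [residueDual_apply] using he r)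
  simpa using LinearMap.congr_fun this 1

theorem comp_equiv {E' : Type*} [AddCommGroup E'] [Module (MvPowerSeries σ A) E'] [Module A E']
    [IsScalarTower A (MvPowerSeries σ A) E'] (h : IsResidue σ ρ)
    (e : E' ≃ₗ[MvPowerSeries σ A] E) :
    IsResidue σ (ρ ∘ₗ e.toLinearMap.restrictScalars A) where
  injective φ ψ hφ := by
    have := h.injective (a₁ := e.toLinearMap ∘ₗ φ) (a₂ := e.toLinearMap ∘ₗ ψ) hφ
    ext
    exact e.injective (LinearMap.congr_fun this 1)
  range_eq := by
    refine h.range_eq ▸ le_antisymm ?_ ?_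
    · rintro _ ⟨φ, rfl⟩
      exact ⟨e.toLinearMap ∘ₗ φ, rfl⟩
    · rintro _ ⟨φ, rfl⟩
      exact ⟨e.symm.toLinearMap ∘ₗ φ, LinearMap.ext fun r ↦
        congrArg ρ (e.apply_symm_apply (φ r))⟩

theorem mem_primaryComponent [Finite σ] [IsNoetherianRing A] (h : IsResidue σ ρ) (e : E) :
    e ∈ Ideal.primaryComponent E (varsIdeal σ A) := by
  refine mem_primaryComponent_of_le_radical (Ideal.span_le.2 ?_)
  rintro _ ⟨j, rfl⟩
  have hfun : residueDual σ _ ρ (LinearMap.toSpanSingleton (MvPowerSeries σ A) E e) ∈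
      Submodule.span A (Set.range (MvPowerSeries.coeff (R := A))) := h.range_eq ▸ ⟨_, rfl⟩
  obtain ⟨k, hk⟩ := exists_pow_X_dvd_imp_of_mem_span_coeff hfun j
  refine ⟨k, (Ideal.mem_torsionOf_iff _ _).2 (h.eq_zero fun r ↦ ?_)⟩
  rw [← mul_smul]
  exact hk _ (dvd_mul_left _ r)

variable {Q ι : Type*} [AddCommGroup Q] [Module (MvPowerSeries σ A) Q] [Module A Q]
  [IsScalarTower A (MvPowerSeries σ A) Q]

theorem residueDual_injective (h : IsResidue σ ρ) : Function.Injective (residueDual σ Q ρ) := by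
  rw [injective_iff_map_eq_zero]
  refine fun φ hφ ↦ LinearMap.ext fun x ↦ h.eq_zero fun r ↦ ?_
  rw [← map_smul]
  exact LinearMap.congr_fun hφ (r • x)

theorem range_residueDual [Finite ι] (h : IsResidue σ ρ)
    (b : Module.Basis ι (MvPowerSeries σ A) Q) :
    LinearMap.range (residueDual σ Q ρ) =
      Submodule.span A (Set.range fun p : (σ →₀ ℕ) × ι ↦
        MvPowerSeries.coeff p.1 ∘ₗ (b.coord p.2).restrictScalars A) := by
  have := Fintype.ofFinite ι
  refine le_antisymm ?_ (Submodule.span_le.2 ?_)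
  · rintro _ ⟨φ, rfl⟩
    have hφ : residueDual σ Q ρ φ = ∑ i, ((b.coord i).restrictScalars A).lcomp A A
        (residueDual σ _ ρ (φ ∘ₗ LinearMap.toSpanSingleton _ Q (b i))) := by
      ext x
      simp only [LinearMap.sum_apply, LinearMap.lcomp_apply, residueDual_apply,
        LinearMap.comp_apply, LinearMap.restrictScalars_apply, LinearMap.toSpanSingleton_apply,
        Module.Basis.coord_apply, ← map_sum, b.sum_repr]
    rw [hφ]
    refine sum_mem fun i _ ↦ ?_
    have hi : residueDual σ _ ρ (φ ∘ₗ LinearMap.toSpanSingleton _ Q (b i)) ∈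
      Submodule.span A (Set.range (MvPowerSeries.coeff (R := A))) := h.range_eq ▸ ⟨_, rfl⟩
    refine Submodule.span_mono ?_ (Submodule.apply_mem_span_image_of_mem_span _ hi)
    rintro _ ⟨_, ⟨v, rfl⟩, rfl⟩
    exact ⟨(v, i), rfl⟩
  · rintro _ ⟨⟨v, i⟩, rfl⟩
    obtain ⟨ψ, hψ⟩ : MvPowerSeries.coeff v ∈ LinearMap.range (residueDual σ _ ρ) :=
      h.range_eq ▸ Submodule.subset_span ⟨v, rfl⟩
    exact ⟨ψ ∘ₗ b.coord i, LinearMap.ext fun x ↦ LinearMap.congr_fun hψ (b.coord i x)⟩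

end IsResidue

end Residue

section InverseModule

variable {σ A : Type*} [CommRing A] [Finite σ]

instance : IsScalarTower A (MvPowerSeries σ A) (HahnSeries (σ → ℤ) A) where
  smul_assoc a r l := by
    rw [MvPowerSeries.smul_eq_C_mul, mul_smul, ← MvPowerSeries.monomial_zero_eq_C_apply]
    ext u
    rw [coeff_monomial_smul, map_zero, sub_zero, HahnSeries.coeff_smul, smul_eq_mul]

theorem finite_setOf_coeff_neg_ne_zero (l : HahnSeries (σ → ℤ) A) :
    {v | l.coeff (-1 - intExponent v) ≠ 0}.Finite := by
  by_contra hinf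
  let f := Set.Infinite.natEmbedding _ hinf
  obtain ⟨g, hg⟩ := wellQuasiOrdered_le.exists_monotone_subseq fun n ↦ (f n).1
  obtain ⟨m, n, hmn, hle⟩ :=
    l.isPWO_support fun n ↦ ⟨-1 - intExponent (f (g n)).1, (f (g n)).2⟩
  have heq : (f (g m)).1 = (f (g n)).1 := (hg m n hmn.le).antisymm <|
    (intExponent_le_iff _ _).1 (sub_le_sub_iff_left _ |>.1 hle)
  exact hmn.ne (g.injective (f.injective (Subtype.ext heq)))

namespace SupportQuotient

variable {W B : UpperSet (σ → ℤ)} {u : σ → ℤ}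

/-- The coefficient at an exponent outside `B`. -/
def coeff (W : UpperSet (σ → ℤ)) (hu : u ∉ B) : SupportQuotient A W B →ₗ[A] A :=
  (((supportedIn A B).submoduleOf (supportedIn A W)).restrictScalars A).liftQ
      { toFun l := l.1.coeff u
        map_add' _ _ := rfl
        map_smul' _ _ := rfl } (fun _ hl ↦ hl u hu) ∘ₗ
    (Submodule.Quotient.restrictScalarsEquiv A ((supportedIn A B).submoduleOf _)).symm.toLinearMap

theorem coeff_mk (hu : u ∉ B) (l : supportedIn A W) :
    coeff W hu (mk W B l) = l.1.coeff u := rfl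

theorem ext_coeff {x y : SupportQuotient A W B}
    (h : ∀ u (hu : u ∉ B), coeff W hu x = coeff W hu y) : x = y := by
  obtain ⟨l, hl⟩ := mk_surjective (x - y)
  refine sub_eq_zero.1 (hl.symm.trans (mk_eq_zero_iff.2 fun u hu ↦ ?_))
  rw [← coeff_mk hu, hl, map_sub, h u hu, sub_self]

end SupportQuotient

namespace InverseModule

omit [Finite σ] in
theorem neg_one_notMem (S : Finset σ) : (-1 : σ → ℤ) ∉ nonnegSomewhere S := by
  simp [mem_nonnegSomewhere]

variable [Fintype σ]

/-- The residue of a Laurent series, that is, its coefficient at `∏ xᵢ⁻¹`. -/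
def residue (σ A : Type*) [CommRing A] [Fintype σ] :
    InverseModule A (Finset.univ : Finset σ) →ₗ[A] A :=
  SupportQuotient.coeff _ (neg_one_notMem Finset.univ)

/-- The class of `∏ xᵢ ^ (-1 - vᵢ)`. -/
def negMonomial (A : Type*) [CommRing A] (v : σ →₀ ℕ) : InverseModule A (Finset.univ : Finset σ) :=
  SupportQuotient.mk _ _
    ⟨HahnSeries.single (-1 - intExponent v) 1,
      fun _ hu ↦ (hu fun i hi ↦ (hi (Finset.mem_univ i)).elim).elim⟩

theorem residue_smul_negMonomial (r : MvPowerSeries σ A) (v : σ →₀ ℕ) :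
    residue σ A (r • negMonomial A v) = MvPowerSeries.coeff v r := by
  change (ofPowerSeries r * HahnSeries.single (-1 - intExponent v) 1).coeff (-1) = _
  rw [HahnSeries.coeff_mul_single, mul_one, sub_sub_cancel, coeff_ofPowerSeries_intExponent]

theorem exists_eq_neg_one_sub_intExponent {u : σ → ℤ} (hu : u ∉ nonnegSomewhere Finset.univ) :
    ∃ v, u = -1 - intExponent v := by
  obtain ⟨v, hv⟩ := (exists_intExponent_eq (u := -1 - u)).2 fun i ↦ by
    have : ¬ 0 ≤ u i := fun h ↦ hu ⟨i, Finset.mem_univ i, h⟩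
    change 0 ≤ -1 - u i
    lia
  exact ⟨v, by rw [hv, sub_sub_cancel]⟩

theorem span_range_negMonomial :
    Submodule.span A (Set.range (negMonomial (σ := σ) A)) = ⊤ := by
  refine Submodule.eq_top_iff'.2 fun e ↦ ?_
  obtain ⟨l, rfl⟩ := SupportQuotient.mk_surjective e
  have hfin := finite_setOf_coeff_neg_ne_zero l.1
  have : SupportQuotient.mk _ _ l =
      ∑ v ∈ hfin.toFinset, l.1.coeff (-1 - intExponent v) • negMonomial A v := by
    refine SupportQuotient.ext_coeff fun u hu ↦ ?_
    obtain ⟨w, rfl⟩ := exists_eq_neg_one_sub_intExponent hu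
    simp only [map_sum, map_smul, negMonomial, SupportQuotient.coeff_mk, HahnSeries.coeff_single,
      sub_right_inj, intExponent_injective.eq_iff, smul_eq_mul, mul_ite, mul_one, mul_zero,
      Finset.sum_ite_eq, Set.Finite.mem_toFinset, Set.mem_ofPred_eq, ne_eq]
    split_ifs with h
    · rfl
    · exact not_not.1 fun h' ↦ h (hfin.mem_toFinset.2 h')
  rw [this]
  exact sum_mem fun v _ ↦ Submodule.smul_mem _ _ (Submodule.subset_span ⟨v, rfl⟩)

theorem isResidue_residue : IsResidue σ (residue σ A) where
  injective := by
    rw [injective_iff_map_eq_zero]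
    refine fun φ hφ ↦ LinearMap.ext_ring ?_
    obtain ⟨l, hl⟩ := SupportQuotient.mk_surjective (φ 1)
    rw [← hl]
    refine SupportQuotient.mk_eq_zero_iff.2 fun u hu ↦ ?_
    obtain ⟨v, rfl⟩ := exists_eq_neg_one_sub_intExponent hu
    have h := LinearMap.congr_fun hφ (MvPowerSeries.monomial v 1)
    rw [residueDual_apply, ← mul_one (MvPowerSeries.monomial v 1), ← smul_eq_mul, map_smul,
      ← hl] at h
    exact ((coeff_monomial_smul ..).trans (one_mul _)).symm.trans h
  range_eq := by
    let e := (LinearMap.ringLmapEquivSelf (MvPowerSeries σ A) A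
      (InverseModule A (Finset.univ : Finset σ))).symm
    rw [← LinearEquiv.range_comp e, LinearMap.range_eq_map, ← span_range_negMonomial,
      Submodule.map_span, ← Set.range_comp]
    congr
    ext v r
    exact residue_smul_negMonomial r v

end InverseModule

end InverseModule

theorem exists_isResidue_H {σ A : Type u} [CommRing A] [IsNoetherianRing A] [Finite σ]
    [Module A (H (varsIdeal σ A) (Nat.card σ) (MvPowerSeries σ A))]
    [IsScalarTower A (MvPowerSeries σ A)
      (H (varsIdeal σ A) (Nat.card σ) (MvPowerSeries σ A))] :
    ∃ ρ : H (varsIdeal σ A) (Nat.card σ) (MvPowerSeries σ A) →ₗ[A] A, IsResidue σ ρ := by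
  have := Fintype.ofFinite σ
  obtain ⟨e⟩ := nonempty_H_inverseModule_equiv (A := A) (Finset.univ : Finset σ) 0
  rw [Finset.card_univ, zero_add, ← Nat.card_eq_fintype_card] at e
  let e₀ := LinearEquiv.ofBijective
    (H.zeroToModule (varsIdeal σ A) (InverseModule A (Finset.univ : Finset σ)))
    ⟨H.zeroToModule_injective _, fun y ↦
      H.exists_zeroToModule_eq _ (InverseModule.isResidue_residue.mem_primaryComponent y)⟩
  exact ⟨_, InverseModule.isResidue_residue.comp_equiv (e.symm.trans e₀)⟩

/-! ## Generically free modules and standard bases -/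

section GenericallyFree

variable {A X P : Type*} [CommRing A] [AddCommGroup X] [Module A X] [AddCommGroup P] [Module A P]

/-- An `A`-module is generically free if it becomes free after inverting one nonzero element
of `A`. -/
def IsGenericallyFree (A X : Type*) [CommRing A] [AddCommGroup X] [Module A X] : Prop :=
  ∃ g : A, g ≠ 0 ∧ Module.Free (Localization.Away g) (Localization.Away g ⊗[A] X)

theorem isLocalizedModule_comp {P' : Type*} [AddCommGroup P'] [Module A P'] (S : Submonoid A)
    (l : P →ₗ[A] P') [IsLocalizedModule S l] (f : X →ₗ[A] P)
    (hker : ∀ x, f x = 0 → ∃ s : S, s • x = 0) (hcoker : ∀ y, ∃ (s : S) (x : X), f x = s • y) :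
    IsLocalizedModule S (l ∘ₗ f) where
  map_units := IsLocalizedModule.map_units l
  surj y := by
    obtain ⟨⟨p, s⟩, hs⟩ := IsLocalizedModule.surj S l y
    obtain ⟨t, x, hx⟩ := hcoker p
    refine ⟨⟨x, t * s⟩, ?_⟩
    rw [LinearMap.comp_apply, hx, LinearMap.map_smul_of_tower, ← hs, mul_smul]
  exists_of_eq {x y} h := by
    obtain ⟨s, hs⟩ := IsLocalizedModule.exists_of_eq (S := S) (f := l) h
    obtain ⟨t, ht⟩ := hker (s • (x - y)) (by
      rw [LinearMap.map_smul_of_tower, map_sub, smul_sub, hs, sub_self])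
    refine ⟨t * s, ?_⟩
    rw [← sub_eq_zero, ← smul_sub, mul_smul, ht]

theorem free_away_of_dvd {g h : A} (hgh : g ∣ h)
    [Module.Free (Localization.Away g) (Localization.Away g ⊗[A] X)] :
    Module.Free (Localization.Away h) (Localization.Away h ⊗[A] X) := by
  have hu : IsUnit (algebraMap A (Localization.Away h) g) :=
    isUnit_of_dvd_unit (map_dvd _ hgh) (IsLocalization.Away.algebraMap_isUnit h)
  let := (IsLocalization.Away.lift (S := Localization.Away g) g hu).toAlgebra
  have : IsScalarTower A (Localization.Away g) (Localization.Away h) :=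
    .of_algebraMap_eq fun x ↦ (IsLocalization.Away.lift_eq g hu x).symm
  exact .of_equiv (TensorProduct.AlgebraTensorModule.cancelBaseChange A (Localization.Away g)
    (Localization.Away h) (Localization.Away h) X)

theorem free_away_of_torsion [Module.Free A P] (g : A) (f : X →ₗ[A] P)
    (hker : ∀ x, f x = 0 → ∃ k : ℕ, g ^ k • x = 0)
    (hcoker : ∀ y, ∃ (k : ℕ) (x : X), f x = g ^ k • y) :
    Module.Free (Localization.Away g) (Localization.Away g ⊗[A] X) := by
  have := isLocalizedModule_comp (.powers g) (TensorProduct.mk A (Localization.Away g) P 1) f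
    (fun x hx ↦ (hker x hx).imp' (fun k ↦ ⟨g ^ k, k, rfl⟩) fun _ ↦ id)
    (fun y ↦ (hcoker y).imp' (fun k ↦ ⟨g ^ k, k, rfl⟩) fun _ ↦ id)
  have hb := IsLocalizedModule.isBaseChange (.powers g) (Localization.Away g)
    (TensorProduct.mk A (Localization.Away g) P 1 ∘ₗ f)
  exact .of_equiv hb.equiv.symm

namespace IsGenericallyFree

theorem congr {X' : Type*} [AddCommGroup X'] [Module A X'] (h : IsGenericallyFree A X)
    (e : X ≃ₗ[A] X') : IsGenericallyFree A X' :=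
  h.imp fun g ⟨hg, _⟩ ↦ ⟨hg, .of_equiv (e.baseChange A (Localization.Away g) X X')⟩

theorem of_subsingleton [Nontrivial A] [Subsingleton X] : IsGenericallyFree A X :=
  ⟨1, one_ne_zero, inferInstance⟩

theorem exists_forall [IsDomain A] {X : ℕ → Type*} [∀ i, AddCommGroup (X i)]
    [∀ i, Module A (X i)] (h : ∀ i, IsGenericallyFree A (X i)) {n : ℕ}
    (hn : ∀ i, n < i → Subsingleton (X i)) : ∃ g : A, g ≠ 0 ∧
      ∀ i, Module.Free (Localization.Away g) (Localization.Away g ⊗[A] X i) := by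
  choose g hg _ using h
  refine ⟨∏ i ∈ Finset.range (n + 1), g i, Finset.prod_ne_zero_iff.2 fun i _ ↦ hg i, fun i ↦ ?_⟩
  by_cases hi : n < i
  · have := hn i hi
    infer_instance
  · exact free_away_of_dvd (Finset.dvd_prod_of_mem g (Finset.mem_range_succ_iff.2 (not_lt.1 hi)))

end IsGenericallyFree

end GenericallyFree

section StandardBasis

variable {A N ι : Type*} [CommRing A] [AddCommGroup N] [Module A N] [LinearOrder ι]
  {c : ι → Module.Dual A N} {V : Submodule A N} {g : A} {b : ι → N}

/-- The indices `u` for which some element of `V` has its first nonzero coordinate, with respect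
to the functionals `c`, at `u`. -/
def leadingIndices (c : ι → Module.Dual A N) (V : Submodule A N) : Set ι :=
  {u | ∃ x ∈ V, c u x ≠ 0 ∧ ∀ w < u, c w x = 0}

/-- For each leading index `u` of `V`, the vector `b u ∈ V` has leading index `u` and leading
coefficient `g`. -/
structure IsStandardBasis (c : ι → Module.Dual A N) (V : Submodule A N) (g : A) (b : ι → N) :
    Prop where
  mem : ∀ u ∈ leadingIndices c V, b u ∈ V
  apply_of_lt : ∀ u ∈ leadingIndices c V, ∀ w < u, c w (b u) = 0
  apply_self : ∀ u ∈ leadingIndices c V, c u (b u) = g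

omit [LinearOrder ι] in
theorem apply_eq_zero_of_mem_span {s : Set ι} {φ : Module.Dual A N}
    (hφ : φ ∈ Submodule.span A (c '' s)) {x : N} (hx : ∀ w ∈ s, c w x = 0) : φ x = 0 :=
  (Submodule.span_le (p := LinearMap.ker (Module.Dual.eval A N x))).2
    (by rintro _ ⟨w, hw, rfl⟩; exact hx w hw) hφ

theorem leadingIndices_mono {U : Submodule A N} (h : U ≤ V) :
    leadingIndices c U ⊆ leadingIndices c V :=
  fun _ ⟨x, hx, hu⟩ ↦ ⟨x, h hx, hu⟩

theorem exists_isLowerSet_superset [LocallyFiniteOrderBot ι] (s : Finset ι) :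
    ∃ t : Finset ι, IsLowerSet (t : Set ι) ∧ s ⊆ t := by
  refine ⟨s.biUnion Finset.Iic, ?_, fun u hu ↦ Finset.mem_biUnion.2 ⟨u, hu, by simp⟩⟩
  simp only [Finset.coe_biUnion, Finset.coe_Iic]
  exact isLowerSet_iUnion₂ fun u _ ↦ isLowerSet_Iic u

theorem exists_isLowerSet_mem_span_image [LocallyFiniteOrderBot ι] {φ : Module.Dual A N}
    (hφ : φ ∈ Submodule.span A (Set.range c)) :
    ∃ t : Finset ι, IsLowerSet (t : Set ι) ∧ φ ∈ Submodule.span A (c '' t) := by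
  obtain ⟨l, rfl⟩ := Finsupp.mem_span_range_iff_exists_finsupp.1 hφ
  obtain ⟨t, ht, hlt⟩ := exists_isLowerSet_superset l.support
  exact ⟨t, ht, sum_mem fun u hu ↦
    Submodule.smul_mem _ _ (Submodule.subset_span ⟨u, hlt hu, rfl⟩)⟩

theorem isLowerSet_and_lt_of_insert {m : ι} {t : Finset ι} (hmax : ∀ u ∈ t, u < m)
    (ht : IsLowerSet (insert m t : Set ι)) : IsLowerSet (t : Set ι) ∧ ∀ u < m, u ∈ t := by
  refine ⟨fun u w hwu hu ↦ ?_, fun u hu ↦ ?_⟩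
  · exact (ht hwu (.inr hu)).resolve_left (hwu.trans_lt (hmax u hu)).ne
  · exact (ht hu.le (.inl rfl)).resolve_left hu.ne

namespace IsStandardBasis

/-- This is division with remainder by the standard basis, carried out on the dual side. -/
theorem apply_eq_zero [IsDomain A] (hb : IsStandardBasis c V g b) (hg : g ≠ 0) {t : Finset ι}
    (ht : IsLowerSet (t : Set ι)) {φ : Module.Dual A N}
    (hφ : ∀ x ∈ V, (∀ w ∈ t, c w x = 0) → φ x = 0)
    (hφb : ∀ u ∈ leadingIndices c V, φ (b u) = 0) : ∀ x ∈ V, φ x = 0 := by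
  induction t using Finset.induction_on_max with
  | empty => exact fun x hx ↦ hφ x hx fun _ h ↦ (Finset.notMem_empty _ h).elim
  | insert m t hmax ih =>
    obtain ⟨ht', hlt⟩ := isLowerSet_and_lt_of_insert hmax (by simpa using ht)
    refine ih ht' fun x hx hxt ↦ ?_
    by_cases hm : c m x = 0
    · exact hφ x hx (Finset.forall_mem_insert .. |>.2 ⟨hm, hxt⟩)
    have hmV : m ∈ leadingIndices c V := ⟨x, hx, hm, fun w hw ↦ hxt w (hlt w hw)⟩
    have h := hφ (g • x - c m x • b m) (sub_mem (V.smul_mem _ hx) (V.smul_mem _ (hb.mem m hmV)))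
      fun w hw ↦ by
        rw [map_sub, map_smul, map_smul, smul_eq_mul, smul_eq_mul]
        obtain rfl | hw := Finset.mem_insert.1 hw
        · rw [hb.apply_self w hmV, mul_comm, sub_self]
        · rw [hb.apply_of_lt m hmV w (hmax w hw), hxt w hw, mul_zero, mul_zero, sub_zero]
    rw [map_sub, map_smul, map_smul, hφb m hmV, smul_zero, sub_zero, smul_eq_mul] at h
    exact (mul_eq_zero.1 h).resolve_left hg

theorem exists_mem_span_apply_eq (hb : IsStandardBasis c V g b) {t : Finset ι}
    (ht : IsLowerSet (t : Set ι)) {y : ι → A} (hy : ∀ u ∉ t, y u = 0) :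
    ∃ k : ℕ, ∃ φ ∈ Submodule.span A (c '' t), ∀ u ∈ leadingIndices c V, φ (b u) = g ^ k * y u := by
  induction t using Finset.induction_on_max generalizing y with
  | empty => exact ⟨0, 0, zero_mem _, fun u _ ↦ by simp [hy u]⟩
  | insert m t hmax ih =>
    obtain ⟨ht', hlt⟩ := isLowerSet_and_lt_of_insert hmax (by simpa using ht)
    obtain ⟨k, φ, hφ, h⟩ := ih ht' (y := (t : Set ι).indicator fun u ↦ g * y u - y m * c m (b u))
      fun u hu ↦ Set.indicator_of_notMem hu _
    refine ⟨k + 1, φ + (g ^ k * y m) • c m, add_mem ?_ ?_, fun u hu ↦ ?_⟩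
    · exact Submodule.span_mono (Set.image_mono (by simp)) hφ
    · exact Submodule.smul_mem _ _ (Submodule.subset_span ⟨m, by simp, rfl⟩)
    rw [LinearMap.add_apply, LinearMap.smul_apply, smul_eq_mul, h u hu]
    by_cases hut : u ∈ t
    · rw [Set.indicator_of_mem (by exact hut)]
      ring
    rw [Set.indicator_of_notMem (by exact hut), mul_zero, zero_add]
    obtain rfl | hum := eq_or_ne u m
    · rw [hb.apply_self u hu]
      ring
    · rw [hb.apply_of_lt u hu m ((lt_or_gt_of_ne hum).resolve_left fun h ↦ hut (hlt u h)),
        hy u (by simp [hum, hut]), mul_zero, mul_zero]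

/-- Up to a power of `g`, a functional on `V` that is continuous for the topology defined by `c`
is a finite combination of the `c w`. -/
theorem exists_mem_span_eqOn [IsDomain A] (hb : IsStandardBasis c V g b) (hg : g ≠ 0) {t : Finset ι}
    (ht : IsLowerSet (t : Set ι)) {φ : Module.Dual A N}
    (hφ : ∀ x ∈ V, (∀ w ∈ t, c w x = 0) → φ x = 0) :
    ∃ k : ℕ, ∃ ψ ∈ Submodule.span A (c '' t), ∀ x ∈ V, ψ x = g ^ k * φ x := by
  obtain ⟨k, ψ, hψ, h⟩ := hb.exists_mem_span_apply_eq ht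
    (y := (t : Set ι).indicator fun u ↦ φ (b u)) fun u hu ↦ Set.indicator_of_notMem hu _
  refine ⟨k, ψ, hψ, fun x hx ↦ sub_eq_zero.1 ?_⟩
  refine hb.apply_eq_zero hg (φ := ψ - g ^ k • φ) ht (fun x hx hxt ↦ ?_) (fun u hu ↦ ?_) x hx
  · rw [LinearMap.sub_apply, LinearMap.smul_apply, apply_eq_zero_of_mem_span hψ hxt, hφ x hx hxt,
      smul_zero, sub_zero]
  · rw [LinearMap.sub_apply, LinearMap.smul_apply, smul_eq_mul, h u hu, sub_eq_zero]
    by_cases hut : u ∈ t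
    · rw [Set.indicator_of_mem (by exact hut)]
    · rw [Set.indicator_of_notMem (by exact hut), hφ _ (hb.mem u hu) fun w hw ↦
        hb.apply_of_lt u hu w (lt_of_not_ge fun h ↦ hut (ht h hw))]

end IsStandardBasis

end StandardBasis

section GenericFreenessCriterion

variable {A Q S P P' X ι ι' : Type*} [CommRing A] [IsDomain A] [AddCommGroup Q] [Module A Q]
  [AddCommGroup S] [Module A S] [AddCommGroup P] [Module A P] [AddCommGroup P'] [Module A P']
  [AddCommGroup X] [Module A X] [LinearOrder ι] [LocallyFiniteOrderBot ι] [LinearOrder ι']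
  [LocallyFiniteOrderBot ι'] {c : ι → Module.Dual A Q} {c' : ι' → Module.Dual A S}
  {δ : P →ₗ[A] Module.Dual A Q} {δ' : P' →ₗ[A] Module.Dual A S} {d : Q →ₗ[A] S} {D : P' →ₗ[A] P}
  {p : P →ₗ[A] X} {g : A} {b : ι → Q} {U : Submodule A Q}

/-- A map `d : Q → S` is strict for the topologies defined by families `c` and `c'` of functionals
on `Q` and `S` if the subspace topology on its range is at least as fine as the quotient
topology. -/
def IsStrict (c : ι → Module.Dual A Q) (c' : ι' → Module.Dual A S) (d : Q →ₗ[A] S) : Prop :=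
  ∀ t : Finset ι, ∃ t' : Finset ι', ∀ x, (∀ w ∈ t', c' w (d x) = 0) →
    ∃ y, d y = d x ∧ ∀ w ∈ t, c w y = 0

theorem exists_pow_smul_eq_zero {b' : ι' → Q} (hg : g ≠ 0)
    (hδ : Function.Injective δ) (hc : LinearMap.range δ = Submodule.span A (Set.range c))
    (hc' : LinearMap.range δ' = Submodule.span A (Set.range c'))
    (hD : ∀ ψ, δ (D ψ) = δ' ψ ∘ₗ d) (hp : Function.Exact D p)
    (hb : IsStandardBasis c (LinearMap.ker d) g b)
    (hb' : IsStandardBasis (fun w ↦ c' w ∘ₗ d) ⊤ g b') (hd : IsStrict c c' d) {φ : P}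
    (hφ : ∀ u ∈ leadingIndices c (LinearMap.ker d), δ φ (b u) = 0) :
    ∃ k : ℕ, g ^ k • p φ = 0 := by
  obtain ⟨t, ht, hφt⟩ := exists_isLowerSet_mem_span_image (c := c) (φ := δ φ) (hc ▸ ⟨φ, rfl⟩)
  have hker : ∀ x ∈ LinearMap.ker d, δ φ x = 0 :=
    hb.apply_eq_zero hg ht (fun x _ hx ↦ apply_eq_zero_of_mem_span hφt hx) hφ
  obtain ⟨s, hs⟩ := hd t
  obtain ⟨t', ht', hst'⟩ := exists_isLowerSet_superset s
  have hφ' : ∀ x ∈ (⊤ : Submodule A Q), (∀ w ∈ t', c' w (d x) = 0) → δ φ x = 0 := fun x _ hx ↦ by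
    obtain ⟨y, hyx, hy⟩ := hs x fun w hw ↦ hx w (hst' hw)
    rw [← apply_eq_zero_of_mem_span hφt hy, ← sub_eq_zero, ← map_sub]
    exact hker _ (by rw [LinearMap.mem_ker, map_sub, hyx, sub_self])
  obtain ⟨k, ψ, hψ, h⟩ := hb'.exists_mem_span_eqOn hg ht' hφ'
  obtain ⟨η, rfl⟩ : ∃ η, ψ = δ' η ∘ₗ d := by
    have hψ' : ψ ∈ (LinearMap.range δ').map d.dualMap := by
      refine Submodule.span_le.2 ?_ hψ
      rintro _ ⟨w, -, rfl⟩
      exact ⟨c' w, hc' ▸ Submodule.subset_span ⟨w, rfl⟩, rfl⟩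
    obtain ⟨_, ⟨η, rfl⟩, rfl⟩ := hψ'
    exact ⟨η, rfl⟩
  refine ⟨k, ?_⟩
  rw [← map_smul, hp]
  refine ⟨η, hδ (LinearMap.ext fun x ↦ ?_)⟩
  rw [hD, h x trivial, map_smul, LinearMap.smul_apply, smul_eq_mul]

theorem exists_apply_eq_pow_mul (hg : g ≠ 0)
    (hc : LinearMap.range δ = Submodule.span A (Set.range c)) {V : Submodule A Q} (hUV : U ≤ V)
    (hV : IsStandardBasis c V g b) (hU : IsStandardBasis c U g b)
    (y : ι →₀ A) (hy : ∀ u ∈ leadingIndices c U, y u = 0) :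
    ∃ (k : ℕ) (φ : P), (∀ x ∈ U, δ φ x = 0) ∧
      ∀ u ∈ leadingIndices c V, δ φ (b u) = g ^ k * y u := by
  obtain ⟨t, ht, hyt⟩ := exists_isLowerSet_superset y.support
  obtain ⟨k, φ, hφ, h⟩ := hV.exists_mem_span_apply_eq ht (y := y) fun u hu ↦
    Finsupp.notMem_support_iff.1 fun hu' ↦ hu (hyt hu')
  obtain ⟨φ, rfl⟩ : φ ∈ LinearMap.range δ :=
    hc ▸ Submodule.span_mono (Set.image_subset_range _ _) hφ
  refine ⟨k, φ, hU.apply_eq_zero hg ht (fun x _ hx ↦ apply_eq_zero_of_mem_span hφ hx)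
    fun u hu ↦ ?_, h⟩
  rw [h u (leadingIndices_mono hUV hu), hy u hu, mul_zero]

/-- The coordinates of `φ` at a set `J` of leading indices of `V`. -/
def coordsAt (hc : LinearMap.range δ = Submodule.span A (Set.range c))
    {V : Submodule A Q} (hV : IsStandardBasis c V g b) {J : Set ι} (hJ : J ⊆ leadingIndices c V) :
    P →ₗ[A] J →₀ A where
  toFun φ := .ofSupportFinite (fun v ↦ δ φ (b v)) <| by
    obtain ⟨t, ht, hφt⟩ := exists_isLowerSet_mem_span_image (c := c) (φ := δ φ) (hc ▸ ⟨φ, rfl⟩)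
    refine (t.finite_toSet.preimage Subtype.val_injective.injOn).subset fun v hv ↦ ?_
    by_contra hvt
    exact hv (apply_eq_zero_of_mem_span hφt fun w hw ↦
      hV.apply_of_lt v (hJ v.2) w (lt_of_not_ge fun h ↦ hvt (ht h hw)))
  map_add' φ ψ := by
    ext v
    simp [Finsupp.ofSupportFinite_coe]
  map_smul' a φ := by
    ext v
    simp [Finsupp.ofSupportFinite_coe]

omit [IsDomain A] in
theorem exists_comp_eq_of_ker_le_ker {M N L : Type*} [AddCommGroup M] [Module A M] [AddCommGroup N]
    [Module A N] [AddCommGroup L] [Module A L] {q : M →ₗ[A] N} (hq : Function.Surjective q)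
    {l : M →ₗ[A] L} (h : LinearMap.ker q ≤ LinearMap.ker l) : ∃ f : N →ₗ[A] L, f ∘ₗ q = l := by
  refine ⟨(LinearMap.ker q).liftQ l h ∘ₗ (q.quotKerEquivOfSurjective hq).symm.toLinearMap, ?_⟩
  ext x
  exact congrArg ((LinearMap.ker q).liftQ l h)
    ((LinearEquiv.symm_apply_eq _).2 (q.quotKerEquivOfSurjective_apply_mk hq x).symm)

theorem isGenericallyFree_map_comap_dualAnnihilator {b' : ι' → Q} (hg : g ≠ 0)
    (hδ : Function.Injective δ) (hc : LinearMap.range δ = Submodule.span A (Set.range c))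
    (hc' : LinearMap.range δ' = Submodule.span A (Set.range c'))
    (hD : ∀ ψ, δ (D ψ) = δ' ψ ∘ₗ d) (hp : Function.Exact D p) (hUd : U ≤ LinearMap.ker d)
    (hb : IsStandardBasis c (LinearMap.ker d) g b) (hbU : IsStandardBasis c U g b)
    (hb' : IsStandardBasis (fun w ↦ c' w ∘ₗ d) ⊤ g b') (hd : IsStrict c c' d) :
    IsGenericallyFree A ((U.dualAnnihilator.comap δ).map p) := by
  have hJ : leadingIndices c (LinearMap.ker d) \ leadingIndices c U ⊆
    leadingIndices c (LinearMap.ker d) := Set.sdiff_subset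
  set Z := U.dualAnnihilator.comap δ
  have hq := p.submoduleMap_surjective Z
  obtain ⟨f, hf⟩ : ∃ f, f ∘ₗ p.submoduleMap Z = (coordsAt hc hb hJ).domRestrict Z := by
    refine exists_comp_eq_of_ker_le_ker hq fun φ hφ ↦ ?_
    obtain ⟨η, hη : D η = φ.1⟩ := (hp _).1 (congrArg Subtype.val hφ)
    ext v
    change δ φ.1 (b v) = 0
    rw [← hη, hD, LinearMap.comp_apply, LinearMap.mem_ker.1 (hb.mem v (hJ v.2)), map_zero]
  have hf' (φ : Z) (v) : f (p.submoduleMap Z φ) v = δ φ.1 (b v) :=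
    DFunLike.congr_fun (LinearMap.congr_fun hf φ) v
  refine ⟨g, hg, free_away_of_torsion g f (fun x hx ↦ ?_) fun y ↦ ?_⟩
  · obtain ⟨φ, rfl⟩ := hq x
    obtain ⟨k, hk⟩ := exists_pow_smul_eq_zero (φ := φ.1) hg hδ hc hc' hD hp hb hb' hd fun u hu ↦ by
      by_cases huU : u ∈ leadingIndices c U
      · exact (Submodule.mem_dualAnnihilator _).1 φ.2 _ (hbU.mem u huU)
      · rw [← hf' φ ⟨u, hu, huU⟩, hx, Finsupp.zero_apply]
    exact ⟨k, Subtype.ext hk⟩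
  · obtain ⟨k, φ, hφ, h⟩ := exists_apply_eq_pow_mul hg hc hUd hb hbU (y.mapDomain Subtype.val)
      fun u hu ↦ Finsupp.mapDomain_of_notMem_range _ _ fun ⟨v, hv⟩ ↦ v.2.2 (hv ▸ hu)
    refine ⟨k, p.submoduleMap Z ⟨φ, (Submodule.mem_dualAnnihilator _).2 hφ⟩, ?_⟩
    ext v
    rw [hf', h v (hJ v.2), Finsupp.mapDomain_apply Subtype.val_injective, Finsupp.smul_apply,
      smul_eq_mul]

end GenericFreenessCriterion

section StandardBasisExistence

variable {A N ι : Type*} [CommRing A] [AddCommGroup N] [Module A N] [LinearOrder ι]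
  {c : ι → Module.Dual A N} {U V : Submodule A N} {g h : A} {b b' : ι → N}

theorem IsStandardBasis.smul (hb : IsStandardBasis c V g b) (a : A) :
    IsStandardBasis c V (a * g) (a • b) where
  mem u hu := V.smul_mem _ (hb.mem u hu)
  apply_of_lt u hu w hw := by rw [Pi.smul_apply, map_smul, hb.apply_of_lt u hu w hw, smul_zero]
  apply_self u hu := by rw [Pi.smul_apply, map_smul, hb.apply_self u hu, smul_eq_mul]

theorem IsStandardBasis.exists_common (hUV : U ≤ V) (hU : IsStandardBasis c U g b)
    (hV : IsStandardBasis c V g b') :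
    ∃ b'', IsStandardBasis c U g b'' ∧ IsStandardBasis c V g b'' := by
  classical
  refine ⟨(leadingIndices c U).piecewise b b', ⟨?_, ?_, ?_⟩, ⟨?_, ?_, ?_⟩⟩
  · exact fun u hu ↦ by simpa [hu] using hU.mem u hu
  · exact fun u hu ↦ by simpa [hu] using hU.apply_of_lt u hu
  · exact fun u hu ↦ by simpa [hu] using hU.apply_self u hu
  all_goals intro u hu; by_cases huU : u ∈ leadingIndices c U
  · simpa [huU] using hUV (hU.mem u huU)
  · simpa [huU] using hV.mem u hu
  · simpa [huU] using hU.apply_of_lt u huU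
  · simpa [huU] using hV.apply_of_lt u hu
  · simpa [huU] using hU.apply_self u huU
  · simpa [huU] using hV.apply_self u hu

end StandardBasisExistence

section PowerSeriesCoordinates

variable {A σ κ : Type*} [CommRing A]

/-- Dickson's lemma. -/
theorem exists_finset_subset_forall_exists_le [Finite σ] [Finite κ] (S : Set ((σ →₀ ℕ) × κ)) :
    ∃ T : Finset ((σ →₀ ℕ) × κ), ↑T ⊆ S ∧ ∀ u ∈ S, ∃ v ≤ u.1, (v, u.2) ∈ T := by
  have hfin : (⋃ k, (·, k) '' {v | Minimal (fun v ↦ (v, k) ∈ S) v}).Finite :=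
    Set.finite_iUnion fun k ↦ Set.Finite.image _
      (WellQuasiOrderedLE.finite_of_isAntichain (setOfPred_minimal_antichain _))
  refine ⟨hfin.toFinset, fun u hu ↦ ?_, fun u hu ↦ ?_⟩
  · obtain ⟨k, v, hv, rfl⟩ := Set.mem_iUnion.1 (hfin.mem_toFinset.1 hu)
    exact hv.1
  · obtain ⟨v, hvu, hv⟩ := exists_minimal_le_of_wellFoundedLT (fun v ↦ (v, u.2) ∈ S) u.1 hu
    exact ⟨v, hvu, hfin.mem_toFinset.2 (Set.mem_iUnion.2 ⟨u.2, v, hv, rfl⟩)⟩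

variable {F : Type*} [AddCommGroup F] [Module (MvPowerSeries σ A) F] [Module A F]
  [IsScalarTower A (MvPowerSeries σ A) F] (b : Module.Basis κ (MvPowerSeries σ A) F)

/-- The coefficients of the coordinates of an element of a free module over a power series ring.
They are indexed by exponent vectors together with basis elements, compared first by degree, then
lexicographically, and then by the basis element. -/
def coordCoeff (u : DegLex (σ →₀ ℕ) ×ₗ κ) : Module.Dual A F :=
  MvPowerSeries.coeff (ofDegLex (ofLex u).1) ∘ₗ (b.coord (ofLex u).2).restrictScalars A

theorem coordCoeff_monomial_smul (t v : σ →₀ ℕ) (k : κ) (a : A) (x : F) :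
    coordCoeff b (toLex (toDegLex v, k)) (MvPowerSeries.monomial t a • x) =
      if t ≤ v then a * coordCoeff b (toLex (toDegLex (v - t), k)) x else 0 := by
  change MvPowerSeries.coeff v (b.repr (MvPowerSeries.monomial t a • x) k) = _
  rw [map_smul, Finsupp.smul_apply, smul_eq_mul, MvPowerSeries.coeff_monomial_mul]
  rfl

theorem coordCoeff_monomial_smul_add (t v : σ →₀ ℕ) (k : κ) (a : A) (x : F) :
    coordCoeff b (toLex (toDegLex (v + t), k)) (MvPowerSeries.monomial t a • x) =
      a * coordCoeff b (toLex (toDegLex v, k)) x := by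
  rw [coordCoeff_monomial_smul, if_pos le_add_self, add_tsub_cancel_right]

theorem range_coordCoeff : Set.range (coordCoeff (A := A) b) = Set.range fun p : (σ →₀ ℕ) × κ ↦
    MvPowerSeries.coeff p.1 ∘ₗ (b.coord p.2).restrictScalars A :=
  (toLex.surjective.comp (toDegLex.surjective.prodMap Function.surjective_id)).range_comp _ ▸ rfl

variable [LinearOrder σ] [LinearOrder κ]

instance [Finite σ] [Finite κ] : LocallyFiniteOrderBot (DegLex (σ →₀ ℕ) ×ₗ κ) := by
  have hfin (u : DegLex (σ →₀ ℕ) ×ₗ κ) : (Set.Iic u).Finite := by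
    have := (Finsupp.finite_of_degree_le (σ := σ) (ofDegLex (ofLex u).1).degree).prod
      (Set.finite_univ (α := κ))
    refine (this.image fun p ↦ toLex (toDegLex p.1, p.2)).subset fun w hw ↦ ?_
    exact ⟨(ofDegLex (ofLex w).1, (ofLex w).2),
      ⟨Finsupp.DegLex.monotone_degree (Prod.Lex.monotone_fst _ _ hw), trivial⟩, rfl⟩
  exact .ofIic _ (fun u ↦ (hfin u).toFinset) fun u w ↦ (hfin u).mem_toFinset

theorem coordCoeff_monomial_smul_eq_zero {t v : σ →₀ ℕ} {k : κ} (a : A) {x : F}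
    (hx : ∀ w < toLex (toDegLex v, k), coordCoeff b w x = 0) :
    ∀ w < toLex (toDegLex (v + t), k), coordCoeff b w (MvPowerSeries.monomial t a • x) = 0 := by
  intro w hw
  obtain ⟨⟨v', k'⟩, rfl⟩ := toLex.surjective w
  obtain ⟨v', rfl⟩ := toDegLex.surjective v'
  rw [coordCoeff_monomial_smul]
  split_ifs with h
  · obtain ⟨v', rfl⟩ := exists_add_of_le h
    rw [add_tsub_cancel_left, hx, mul_zero]
    rw [add_comm t, Prod.Lex.toLex_lt_toLex] at hw
    simpa only [Prod.Lex.toLex_lt_toLex, toDegLex_add, add_lt_add_iff_right, add_left_inj] using hw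
  · rfl

/-- Finitely many leading indices generate all of them under multiplication by monomials, and `g`
is the product of the corresponding leading coefficients. -/
theorem exists_isStandardBasis [IsDomain A] [Finite σ] [Finite κ] {N : Type*} [AddCommGroup N]
    [Module (MvPowerSeries σ A) N] [Module A N] [IsScalarTower A (MvPowerSeries σ A) N]
    (d : N →ₗ[MvPowerSeries σ A] F) (V : Submodule (MvPowerSeries σ A) N) :
    ∃ g : A, g ≠ 0 ∧ ∃ y, IsStandardBasis (fun u ↦ coordCoeff b u ∘ₗ d.restrictScalars A)
      (V.restrictScalars A) g y := by
  classical
  set c : DegLex (σ →₀ ℕ) ×ₗ κ → Module.Dual A N := fun u ↦ coordCoeff b u ∘ₗ d.restrictScalars A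
  set L := leadingIndices c (V.restrictScalars A)
  obtain ⟨T, hTL, hT⟩ := exists_finset_subset_forall_exists_le
    ((fun u : (σ →₀ ℕ) × κ ↦ toLex (toDegLex u.1, u.2)) ⁻¹' L)
  choose! x hxV hx hx' using fun u (hu : u ∈ L) ↦ hu
  set g := ∏ u ∈ T, c (toLex (toDegLex u.1, u.2)) (x (toLex (toDegLex u.1, u.2)))
  have hy : ∀ u ∈ L, ∃ y ∈ V, (∀ w < u, c w y = 0) ∧ c u y = g := fun u hu ↦ by
    obtain ⟨⟨v', k⟩, rfl⟩ := toLex.surjective u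
    obtain ⟨v, hv, hvT⟩ := hT (ofDegLex v', k) hu
    obtain ⟨t, ht⟩ := exists_add_of_le hv
    obtain rfl : v' = toDegLex (v + t) := ht
    obtain ⟨a, ha⟩ := Finset.dvd_prod_of_mem
      (fun u ↦ c (toLex (toDegLex u.1, u.2)) (x (toLex (toDegLex u.1, u.2)))) hvT
    refine ⟨MvPowerSeries.monomial t a • x (toLex (toDegLex v, k)),
      V.smul_mem _ (hxV _ (hTL hvT)), fun w hw ↦ ?_, ?_⟩
    · rw [LinearMap.comp_apply, LinearMap.restrictScalars_apply, map_smul]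
      exact coordCoeff_monomial_smul_eq_zero b a (hx' _ (hTL hvT)) w hw
    · rw [LinearMap.comp_apply, LinearMap.restrictScalars_apply, map_smul,
        coordCoeff_monomial_smul_add, mul_comm]
      exact ha.symm
  choose! y hyV hy hyg using hy
  exact ⟨g, Finset.prod_ne_zero_iff.2 fun u hu ↦ hx _ (hTL hu), y, hyV, hy, hyg⟩

end PowerSeriesCoordinates

section ArtinRees

variable {A σ : Type*} [CommRing A]

theorem coeff_eq_zero_of_mem_varsIdeal_pow {k : ℕ} {r : MvPowerSeries σ A}
    (hr : r ∈ varsIdeal σ A ^ k) {v : σ →₀ ℕ} (hv : v.degree < k) :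
    MvPowerSeries.coeff v r = 0 := by
  have hle : varsIdeal σ A ≤ RingHom.ker MvPowerSeries.constantCoeff :=
    Ideal.span_le.2 (by rintro _ ⟨j, rfl⟩; exact MvPowerSeries.constantCoeff_X j)
  have horder : (k : ℕ∞) ≤ r.order := by
    clear hv
    induction k generalizing r with
    | zero => simp
    | succ k ih =>
      rw [pow_succ] at hr
      refine Submodule.mul_induction_on hr (fun s hs t ht ↦ ?_) fun s t hs ht ↦
        (le_min hs ht).trans MvPowerSeries.min_order_le_add
      rw [Nat.cast_succ]
      have ht' := MvPowerSeries.one_le_order_iff_constCoeff_eq_zero.2 (hle ht)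
      exact (add_le_add (ih hs) ht').trans MvPowerSeries.le_order_mul
  exact MvPowerSeries.coeff_of_lt_order ((Nat.cast_lt.2 hv).trans_le horder)

theorem mem_span_X_pow_of_coeff_eq_zero {k : ℕ} (s : Finset σ) {r : MvPowerSeries σ A}
    (hr : ∀ v : σ →₀ ℕ, (∀ j ∈ s, v j < k) → MvPowerSeries.coeff v r = 0) :
    r ∈ Ideal.span ((fun j ↦ (MvPowerSeries.X j : MvPowerSeries σ A) ^ k) '' s) := by
  classical
  induction s using Finset.induction_on generalizing r with
  | empty =>
    rw [show r = 0 from MvPowerSeries.ext fun v ↦ hr v (by simp)]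
    exact zero_mem _
  | insert j s _ ih =>
    let r' : MvPowerSeries σ A := fun v ↦ if v j < k then MvPowerSeries.coeff v r else 0
    have hr' (v) : MvPowerSeries.coeff v r' = if v j < k then MvPowerSeries.coeff v r else 0 := rfl
    rw [← sub_add_cancel r r']
    refine add_mem (Ideal.mem_of_dvd _ (MvPowerSeries.X_pow_dvd_iff.2 fun v hv ↦ ?_)
      (Ideal.subset_span ⟨j, by simp, rfl⟩))
      (Ideal.span_mono (Set.image_mono (by simp)) (ih fun v hv ↦ ?_))
    · rw [map_sub, hr', if_pos hv, sub_self]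
    · rw [hr']
      split_ifs with h
      · exact hr v (Finset.forall_mem_insert .. |>.2 ⟨h, hv⟩)
      · rfl

variable {κ F : Type*} [AddCommGroup F] [Module (MvPowerSeries σ A) F] [Module A F]
  [IsScalarTower A (MvPowerSeries σ A) F] (b : Module.Basis κ (MvPowerSeries σ A) F)

theorem exists_pow_smul_top_imp_coordCoeff_eq_zero (t : Finset (DegLex (σ →₀ ℕ) ×ₗ κ)) :
    ∃ k : ℕ, ∀ x ∈ varsIdeal σ A ^ k • (⊤ : Submodule (MvPowerSeries σ A) F),
      ∀ w ∈ t, coordCoeff b w x = 0 := by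
  obtain ⟨k, hk⟩ := (t.image fun w ↦ (ofDegLex (ofLex w).1).degree).bddAbove
  refine ⟨k + 1, fun x hx w hw ↦ ?_⟩
  have hle : varsIdeal σ A ^ (k + 1) • ⊤ ≤
      Submodule.comap (b.coord (ofLex w).2) (varsIdeal σ A ^ (k + 1)) := by
    refine Submodule.smul_le.2 fun r hr y _ ↦ ?_
    rw [Submodule.mem_comap, map_smul, smul_eq_mul]
    exact Ideal.mul_mem_right _ _ hr
  exact coeff_eq_zero_of_mem_varsIdeal_pow (hle hx)
    (Nat.lt_succ_of_le (hk (Finset.mem_image_of_mem _ hw)))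

theorem exists_coordCoeff_eq_zero_imp_mem_pow_smul_top [Finite σ] [Finite κ] (k : ℕ) :
    ∃ t : Finset (DegLex (σ →₀ ℕ) ×ₗ κ), ∀ x, (∀ w ∈ t, coordCoeff b w x = 0) →
      x ∈ varsIdeal σ A ^ k • (⊤ : Submodule (MvPowerSeries σ A) F) := by
  classical
  have := Fintype.ofFinite σ
  have := Fintype.ofFinite κ
  have hspan : Ideal.span ((fun j ↦ (MvPowerSeries.X j : MvPowerSeries σ A) ^ k) ''
      (Finset.univ : Finset σ)) ≤ varsIdeal σ A ^ k :=
    Ideal.span_le.2 (by rintro _ ⟨j, -, rfl⟩; exact Ideal.pow_mem_pow (X_mem_varsIdeal j) k)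
  have hfin : (Set.Iic (Finsupp.equivFunOnFinite.symm fun _ : σ ↦ k) ×ˢ
      (Set.univ : Set κ)).Finite := (Set.finite_Iic _).prod Set.finite_univ
  refine ⟨hfin.toFinset.image fun p ↦ toLex (toDegLex p.1, p.2), fun x hx ↦ ?_⟩
  rw [← b.sum_repr x]
  refine sum_mem fun j _ ↦ Submodule.smul_mem_smul (hspan ?_) trivial
  refine mem_span_X_pow_of_coeff_eq_zero _ fun v hv ↦ hx (toLex (toDegLex v, j)) ?_
  exact Finset.mem_image_of_mem _
    (hfin.mem_toFinset.2 ⟨fun i ↦ (hv i (Finset.mem_univ i)).le, trivial⟩)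

theorem isStrict_coordCoeff [IsNoetherianRing A] [Finite σ] {κ' F' : Type*} [Finite κ']
    [AddCommGroup F'] [Module (MvPowerSeries σ A) F'] [Module A F']
    [IsScalarTower A (MvPowerSeries σ A) F']
    (b' : Module.Basis κ' (MvPowerSeries σ A) F') (d : F →ₗ[MvPowerSeries σ A] F') :
    IsStrict (coordCoeff b) (coordCoeff b') (d.restrictScalars A) := by
  have := Module.Finite.of_basis b'
  intro t
  obtain ⟨k, hk⟩ := exists_pow_smul_top_imp_coordCoeff_eq_zero b t
  obtain ⟨l, hl⟩ := Ideal.exists_pow_inf_eq_pow_smul (varsIdeal σ A) (LinearMap.range d)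
  obtain ⟨t', ht'⟩ := exists_coordCoeff_eq_zero_imp_mem_pow_smul_top b' (k + l)
  refine ⟨t', fun x hx ↦ ?_⟩
  have hdx : d x ∈ varsIdeal σ A ^ (k + l) • ⊤ ⊓ LinearMap.range d := ⟨ht' _ hx, x, rfl⟩
  rw [hl _ (Nat.le_add_left _ _), Nat.add_sub_cancel] at hdx
  have hdx' : d x ∈ varsIdeal σ A ^ k • LinearMap.range d :=
    Submodule.smul_mono le_rfl inf_le_right hdx
  rw [LinearMap.range_eq_map, ← Submodule.map_smul''] at hdx'
  obtain ⟨y, hy, hyx⟩ := hdx'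
  exact ⟨y, hyx, hk y hy⟩

end ArtinRees

/-! ## Duality and generic freeness of local cohomology -/

section ResidueDual

variable {σ A T Q S E X : Type*} [CommRing A]
  [AddCommGroup T] [Module (MvPowerSeries σ A) T] [Module A T]
  [IsScalarTower A (MvPowerSeries σ A) T]
  [AddCommGroup Q] [Module (MvPowerSeries σ A) Q] [Module A Q]
  [IsScalarTower A (MvPowerSeries σ A) Q]
  [AddCommGroup S] [Module (MvPowerSeries σ A) S] [Module A S]
  [IsScalarTower A (MvPowerSeries σ A) S]
  [AddCommGroup E] [Module (MvPowerSeries σ A) E] [Module A E]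
  [IsScalarTower A (MvPowerSeries σ A) E]
  [AddCommGroup X] [Module (MvPowerSeries σ A) X] [Module A X]
  [IsScalarTower A (MvPowerSeries σ A) X]
  {ρ : E →ₗ[A] A}

theorem IsResidue.mem_dualAnnihilator_iff (h : IsResidue σ ρ) (d₀ : T →ₗ[MvPowerSeries σ A] Q)
    (φ : Q →ₗ[MvPowerSeries σ A] E) :
    residueDual σ Q ρ φ ∈ (LinearMap.range (d₀.restrictScalars A)).dualAnnihilator ↔
      φ ∘ₗ d₀ = 0 := by
  rw [← h.residueDual_injective.eq_iff, map_zero, Submodule.mem_dualAnnihilator]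
  exact ⟨fun hφ ↦ LinearMap.ext fun x ↦ hφ _ ⟨x, rfl⟩, fun hφ _ ⟨x, hx⟩ ↦
    hx ▸ LinearMap.congr_fun hφ x⟩

theorem IsResidue.comap_residueDual_dualAnnihilator (h : IsResidue σ ρ)
    (d₀ : T →ₗ[MvPowerSeries σ A] Q) :
    (LinearMap.range (d₀.restrictScalars A)).dualAnnihilator.comap (residueDual σ Q ρ) =
      (LinearMap.ker (d₀.lcomp (MvPowerSeries σ A) E)).restrictScalars A :=
  Submodule.ext (h.mem_dualAnnihilator_iff d₀)

theorem IsResidue.isGenericallyFree_map_ker_lcomp [IsDomain A] [IsNoetherianRing A] [Finite σ]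
    [Module.Free (MvPowerSeries σ A) Q] [Module.Finite (MvPowerSeries σ A) Q]
    [Module.Free (MvPowerSeries σ A) S] [Module.Finite (MvPowerSeries σ A) S]
    (h : IsResidue σ ρ) {d₀ : T →ₗ[MvPowerSeries σ A] Q} {d : Q →ₗ[MvPowerSeries σ A] S}
    (hd : d ∘ₗ d₀ = 0) {p : (Q →ₗ[MvPowerSeries σ A] E) →ₗ[MvPowerSeries σ A] X}
    (hp : Function.Exact (d.lcomp (MvPowerSeries σ A) E) p) :
    IsGenericallyFree A ((LinearMap.ker (d₀.lcomp (MvPowerSeries σ A) E)).map p) := by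
  let : LinearOrder σ := LinearOrder.lift' _ (Finite.equivFin σ).injective
  let β := Module.finBasis (MvPowerSeries σ A) Q
  let β' := Module.finBasis (MvPowerSeries σ A) S
  have hUV : LinearMap.range (d₀.restrictScalars A) ≤ LinearMap.ker (d.restrictScalars A) := by
    rintro _ ⟨x, rfl⟩
    exact LinearMap.congr_fun hd x
  obtain ⟨g₁, hg₁, b₁, hb₁⟩ := exists_isStandardBasis β LinearMap.id (LinearMap.range d₀)
  obtain ⟨g₂, hg₂, b₂, hb₂⟩ := exists_isStandardBasis β LinearMap.id (LinearMap.ker d)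
  obtain ⟨g₃, hg₃, b₃, hb₃⟩ := exists_isStandardBasis β' d ⊤
  have hU := (hb₁.smul g₂).smul g₃
  have hV := (hb₂.smul g₁).smul g₃
  rw [mul_comm g₁] at hV
  have hT := hb₃.smul (g₂ * g₁)
  rw [mul_comm _ g₃] at hT
  obtain ⟨b, hbU, hbV⟩ := IsStandardBasis.exists_common hUV hU hV
  have := isGenericallyFree_map_comap_dualAnnihilator (p := p.restrictScalars A)
    (c := coordCoeff β) (c' := coordCoeff β')
    (D := (d.lcomp (MvPowerSeries σ A) E).restrictScalars A)
    (mul_ne_zero hg₃ (mul_ne_zero hg₂ hg₁)) h.residueDual_injective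
    (range_coordCoeff β ▸ h.range_residueDual β) (range_coordCoeff β' ▸ h.range_residueDual β')
    (fun _ ↦ rfl) hp hUV hbV hbU hT (isStrict_coordCoeff β β' d)
  rwa [h.comap_residueDual_dualAnnihilator] at this

end ResidueDual

namespace H

variable {R : Type u} [CommRing R] (I : Ideal R) (i : ℕ)
  {F F' N : Type u} [AddCommGroup F] [Module R F] [AddCommGroup F'] [Module R F']
  [AddCommGroup N] [Module R N]

/-- The `R`-linear map `f ↦ Hⁱ_I(f)`. -/
def mapLinear (F F' : Type u) [AddCommGroup F] [Module R F] [AddCommGroup F'] [Module R F'] :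
    (F →ₗ[R] F') →ₗ[R] H I i F →ₗ[R] H I i F' where
  toFun := map I i
  map_add' := map_add I i
  map_smul' := map_smul I i

/-- The pairing `(t, ξ) ↦ Hⁱ_I(ξ) t` of `Hⁱ_I(F)` with the dual of `F`, seen as a map from `Hⁱ_I(F)`
to the homomorphisms `Fᵛ → Hⁱ_I(R)`. -/
def evalDual (F : Type u) [AddCommGroup F] [Module R F] :
    H I i F →ₗ[R] Module.Dual R F →ₗ[R] H I i R :=
  (mapLinear I i F R).flip

variable {I i}

theorem evalDual_apply (t : H I i F) (ξ : Module.Dual R F) : evalDual I i F t ξ = map I i ξ t := rfl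

theorem evalDual_map (f : F →ₗ[R] F') (t : H I i F) :
    evalDual I i F' (map I i f t) = evalDual I i F t ∘ₗ f.dualMap := by
  ext ξ
  exact (LinearMap.congr_fun (map_comp I i ξ f) t).symm

theorem sum_map_toSpanSingleton_map_coord {κ : Type*} [Fintype κ] (b : Module.Basis κ R F)
    (t : H I i F) :
    ∑ j, map I i (LinearMap.toSpanSingleton R F (b j)) (map I i (b.coord j) t) = t := by
  have hid : ∑ j, LinearMap.toSpanSingleton R F (b j) ∘ₗ b.coord j = LinearMap.id := by
    ext x
    simp
  have := congrArg (mapLinear I i F F · t) hid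
  simpa only [map_sum, LinearMap.sum_apply, mapLinear, LinearMap.coe_mk, AddHom.coe_mk, map_comp,
    map_id, LinearMap.comp_apply, LinearMap.id_apply] using this

theorem evalDual_bijective [Module.Free R F] [Module.Finite R F] :
    Function.Bijective (evalDual I i F) := by
  let b := Module.Free.chooseBasis R F
  constructor
  · rw [injective_iff_map_eq_zero]
    intro t ht
    rw [← sum_map_toSpanSingleton_map_coord b t]
    refine Finset.sum_eq_zero fun j _ ↦ ?_
    rw [← evalDual_apply, ht, LinearMap.zero_apply, _root_.map_zero]
  · intro φ
    refine ⟨∑ j, map I i (LinearMap.toSpanSingleton R F (b j)) (φ (b.coord j)), ?_⟩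
    refine LinearMap.ext fun ξ ↦ ?_
    have hξ (j) : ξ ∘ₗ LinearMap.toSpanSingleton R F (b j) = ξ (b j) • LinearMap.id := by
      ext
      simp
    calc evalDual I i F (∑ j, map I i (LinearMap.toSpanSingleton R F (b j)) (φ (b.coord j))) ξ
        = ∑ j, ξ (b j) • φ (b.coord j) := by
          rw [map_sum, LinearMap.sum_apply]
          refine Finset.sum_congr rfl fun j _ ↦ ?_
          rw [evalDual_apply, ← LinearMap.comp_apply, ← map_comp, hξ, map_smul, map_id]
          rfl
      _ = φ ξ := by
        conv_rhs => rw [← b.sum_dual_apply_smul_coord ξ, map_sum]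
        exact Finset.sum_congr rfl fun j _ ↦ (φ.map_smul _ _).symm

variable (I i F) in
/-- The identification of `Hⁱ_I(F)` with the homomorphisms `Fᵛ → Hⁱ_I(R)` for a finite free module
`F`. -/
def evalDualEquiv [Module.Free R F] [Module.Finite R F] :
    H I i F ≃ₗ[R] Module.Dual R F →ₗ[R] H I i R :=
  .ofBijective (evalDual I i F) evalDual_bijective

theorem evalDualEquiv_map [Module.Free R F] [Module.Finite R F] [Module.Free R F']
    [Module.Finite R F'] (f : F →ₗ[R] F') (t : H I i F) :
    evalDualEquiv I i F' (map I i f t) = f.dualMap.lcomp R (H I i R) (evalDualEquiv I i F t) :=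
  evalDual_map f t

theorem exact_lcomp_dualMap [Module.Free R F] [Module.Finite R F] [Module.Free R F']
    [Module.Finite R F'] {v : F' →ₗ[R] F} {q : F →ₗ[R] N}
    (h : Function.Exact (map I i v) (map I i q)) :
    Function.Exact (v.dualMap.lcomp R (H I i R))
      (map I i q ∘ₗ (evalDualEquiv I i F).symm.toLinearMap) := by
  rw [LinearMap.exact_iff, LinearMap.ker_comp, h.linearMap_ker_eq]
  ext ψ
  obtain ⟨t, rfl⟩ := (evalDualEquiv I i F).surjective ψ
  simp only [Submodule.mem_comap, LinearEquiv.coe_coe, LinearEquiv.symm_apply_apply,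
    LinearMap.mem_range]
  rw [(evalDualEquiv I i F').surjective.exists]
  simp only [← evalDualEquiv_map, (evalDualEquiv I i F).injective.eq_iff]

theorem map_ker_lcomp_dualMap [Module.Free R F] [Module.Finite R F] [Module.Free R F']
    [Module.Finite R F'] (q : F →ₗ[R] N) (u : N →ₗ[R] F') :
    (LinearMap.ker ((u ∘ₗ q).dualMap.lcomp R (H I i R))).map
        (evalDualEquiv I i F).symm.toLinearMap =
      (LinearMap.ker (map I i u)).comap (map I i q) := by
  rw [← LinearMap.ker_comp, ← map_comp]
  refine (Submodule.map_equiv_eq_comap_symm (evalDualEquiv I i F).symm _).trans ?_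
  ext t
  rw [LinearEquiv.symm_symm, Submodule.mem_comap, LinearMap.mem_ker, LinearMap.mem_ker,
    LinearEquiv.coe_coe, ← evalDualEquiv_map, LinearEquiv.map_eq_zero_iff]

theorem subsingleton_of_free [Module.Free R F] [Module.Finite R F] [Subsingleton (H I i R)] :
    Subsingleton (H I i F) :=
  evalDual_bijective.injective.subsingleton

end H

section Main

variable {σ A : Type u} [CommRing A] [IsNoetherianRing A] [Finite σ]
  {N N' N'' : Type u} [AddCommGroup N] [Module (MvPowerSeries σ A) N] [AddCommGroup N']
  [Module (MvPowerSeries σ A) N'] [AddCommGroup N''] [Module (MvPowerSeries σ A) N'']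

theorem subsingleton_H_of_card_lt {i : ℕ} (hi : Nat.card σ < i) :
    Subsingleton (H (varsIdeal σ A) i N) := by
  classical
  have := Fintype.ofFinite σ
  refine H.subsingleton_of_span_eq (s := Finset.univ.image MvPowerSeries.X) ?_ ?_
  · rw [Finset.coe_image, Finset.coe_univ, Set.image_univ, varsIdeal]
  · exact (Finset.card_image_le.trans_eq Nat.card_eq_fintype_card.symm).trans_lt hi

theorem H.map_card_surjective {g : N →ₗ[MvPowerSeries σ A] N'} (hg : Function.Surjective g) :
    Function.Surjective (H.map (varsIdeal σ A) (Nat.card σ) g) := by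
  have : Subsingleton (H (varsIdeal σ A) (Nat.card σ + 1) (LinearMap.ker g)) :=
    subsingleton_H_of_card_lt (Nat.lt_succ_self _)
  exact H.map_surjective _ (LinearMap.ker g).injective_subtype
    (LinearMap.exact_subtype_ker_map g) hg

theorem H.map_card_exact {f : N →ₗ[MvPowerSeries σ A] N'} {g : N' →ₗ[MvPowerSeries σ A] N''}
    (h : Function.Exact f g) (hg : Function.Surjective g) :
    Function.Exact (H.map (varsIdeal σ A) (Nat.card σ) f)
      (H.map (varsIdeal σ A) (Nat.card σ) g) := by
  obtain ⟨_, hker, -, -⟩ := H.exists_connecting (varsIdeal σ A) (Nat.card σ)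
    (LinearMap.ker g).injective_subtype (LinearMap.exact_subtype_ker_map g) hg
  have hf : (LinearMap.ker g).subtype ∘ₗ f.codRestrict (LinearMap.ker g) h.apply_apply_eq_zero =
      f := rfl
  have hsurj : Function.Surjective (f.codRestrict (LinearMap.ker g) h.apply_apply_eq_zero) := by
    rintro ⟨y, hy⟩
    obtain ⟨x, rfl⟩ := (h y).1 hy
    exact ⟨x, rfl⟩
  rw [LinearMap.exact_iff] at hker ⊢
  rw [hker, ← hf, H.map_comp, LinearMap.range_comp_of_range_eq_top _
    (LinearMap.range_eq_top.2 (H.map_card_surjective hsurj))]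

instance (i : ℕ) : Module A (H (varsIdeal σ A) i N) :=
  Module.compHom _ (algebraMap A (MvPowerSeries σ A))

instance (i : ℕ) : IsScalarTower A (MvPowerSeries σ A) (H (varsIdeal σ A) i N) :=
  .of_algebraMap_smul fun _ _ ↦ rfl

theorem isGenericallyFree_ker_map_card [IsDomain A] [Module.Finite (MvPowerSeries σ A) N]
    [Module.Free (MvPowerSeries σ A) N'] [Module.Finite (MvPowerSeries σ A) N']
    (u : N →ₗ[MvPowerSeries σ A] N') :
    IsGenericallyFree A (LinearMap.ker (H.map (varsIdeal σ A) (Nat.card σ) u)) := by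
  obtain ⟨a, q, hq⟩ := Module.Finite.exists_fin' (MvPowerSeries σ A) N
  obtain ⟨b, v, hv⟩ := Module.Finite.exists_fin' (MvPowerSeries σ A) (LinearMap.ker q)
  obtain ⟨ρ, hρ⟩ := exists_isResidue_H (σ := σ) (A := A)
  have hex : Function.Exact ((LinearMap.ker q).subtype ∘ₗ v) q := by
    rw [LinearMap.exact_iff, LinearMap.range_comp_of_range_eq_top _ (LinearMap.range_eq_top.2 hv),
      Submodule.range_subtype]
  have hd : ((LinearMap.ker q).subtype ∘ₗ v).dualMap ∘ₗ (u ∘ₗ q).dualMap = 0 := by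
    rw [LinearMap.dualMap_comp_dualMap, LinearMap.comp_assoc, hex.linearMap_comp_eq_zero,
      LinearMap.comp_zero]
    exact Module.Dual.transpose.map_zero
  have hker := Submodule.map_comap_eq_of_surjective (H.map_card_surjective hq)
    (LinearMap.ker (H.map (varsIdeal σ A) (Nat.card σ) u))
  rw [← H.map_ker_lcomp_dualMap, ← Submodule.map_comp] at hker
  rw [← hker]
  exact hρ.isGenericallyFree_map_ker_lcomp hd (H.exact_lcomp_dualMap (H.map_card_exact hex hq))

theorem isGenericallyFree_H_card [IsDomain A] [Module.Finite (MvPowerSeries σ A) N] :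
    IsGenericallyFree A (H (varsIdeal σ A) (Nat.card σ) N) := by
  have := isGenericallyFree_ker_map_card (0 : N →ₗ[MvPowerSeries σ A] MvPowerSeries σ A)
  have h0 : H.map (varsIdeal σ A) (Nat.card σ) (0 : N →ₗ[MvPowerSeries σ A] MvPowerSeries σ A) =
      0 := (H.mapLinear _ _ N (MvPowerSeries σ A)).map_zero
  rw [h0, LinearMap.ker_zero] at this
  exact this.congr (Submodule.topEquiv.restrictScalars A)

theorem isGenericallyFree_H_of_lt_card [IsDomain A] [Module.Finite (MvPowerSeries σ A) N] {i : ℕ}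
    (hi : i < Nat.card σ) : IsGenericallyFree A (H (varsIdeal σ A) i N) := by
  obtain ⟨d, hd⟩ := Nat.exists_eq_add_of_lt hi
  induction d generalizing i N with
  | zero =>
    obtain ⟨a, f, hf⟩ := Module.Finite.exists_fin' (MvPowerSeries σ A) N
    have := subsingleton_H_self (A := A) hi
    have : Subsingleton (H (varsIdeal σ A) i (Fin a → MvPowerSeries σ A)) := H.subsingleton_of_free
    obtain ⟨e⟩ := H.nonempty_ker_map_equiv (I := varsIdeal σ A) i
      (LinearMap.ker f).injective_subtype (LinearMap.exact_subtype_ker_map f) hf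
    have := isGenericallyFree_ker_map_card (LinearMap.ker f).subtype
    rw [hd] at this
    exact this.congr (e.symm.restrictScalars A)
  | succ d ih =>
    obtain ⟨a, f, hf⟩ := Module.Finite.exists_fin' (MvPowerSeries σ A) N
    have hi' : i + 1 < Nat.card σ := by omega
    have := subsingleton_H_self (A := A) hi
    have := subsingleton_H_self (A := A) hi'
    have : Subsingleton (H (varsIdeal σ A) i (Fin a → MvPowerSeries σ A)) := H.subsingleton_of_free
    have : Subsingleton (H (varsIdeal σ A) (i + 1) (Fin a → MvPowerSeries σ A)) :=
      H.subsingleton_of_free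
    obtain ⟨e⟩ := H.nonempty_equiv (I := varsIdeal σ A) i
      (LinearMap.ker f).injective_subtype (LinearMap.exact_subtype_ker_map f) hf
    exact (ih (N := LinearMap.ker f) hi' (by omega)).congr (e.symm.restrictScalars A)

theorem isGenericallyFree_H [IsDomain A] [Module.Finite (MvPowerSeries σ A) N] (i : ℕ) :
    IsGenericallyFree A (H (varsIdeal σ A) i N) := by
  obtain hi | rfl | hi := lt_trichotomy i (Nat.card σ)
  · exact isGenericallyFree_H_of_lt_card hi
  · exact isGenericallyFree_H_card
  · have : Subsingleton (H (varsIdeal σ A) i N) := subsingleton_H_of_card_lt hi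
    exact .of_subsingleton

end Main

end

end GenericFreeness

theorem stmt0_general.{u} {σ A M : Type u} [Finite σ] [CommRing A] [IsDomain A]
    [IsNoetherianRing A] [AddCommGroup M] [Module (MvPowerSeries σ A) M]
    [Module.Finite (MvPowerSeries σ A) M] :
    ∃ g : A, g ≠ 0 ∧ ∀ i : ℕ,
      Module.Free (Localization.Away g) (Localization.Away g ⊗[A]
        RestrictScalars A (MvPowerSeries σ A)
          ((localCohomology (Ideal.span (Set.range (MvPowerSeries.X (σ := σ) (R := A)))) i).obj
            (ModuleCat.of (MvPowerSeries σ A) M))) :=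
  GenericFreeness.IsGenericallyFree.exists_forall
    (X := fun i ↦ GenericFreeness.H (GenericFreeness.varsIdeal σ A) i M)
    GenericFreeness.isGenericallyFree_H fun _ ↦ GenericFreeness.subsingleton_H_of_card_lt

/-- **Generic freeness of local cohomology over a power series ring.**
Let `A` be a Noetherian domain, `R = A[[x₁, …, xₙ]]`, `I = (x₁, …, xₙ)`.  For every finitely
generated `R`-module `M` there is a nonzero `g ∈ A` such that for every `i ≥ 0` the local
cohomology module `Hⁱ_I(M) ⊗[A] A_g` is a free `A_g`-module. -/
theorem stmt0 (A : Type) [CommRing A] [IsDomain A] [IsNoetherianRing A] (n : ℕ)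
    (M : Type) [AddCommGroup M] [Module (MvPowerSeries (Fin n) A) M]
    [Module.Finite (MvPowerSeries (Fin n) A) M]
    (I : Ideal (MvPowerSeries (Fin n) A))
    (hI : I = Ideal.span (Set.range (MvPowerSeries.X : Fin n → MvPowerSeries (Fin n) A))) :
    ∃ g : A, g ≠ 0 ∧ ∀ i : ℕ,
      Module.Free (Localization.Away g)
        (TensorProduct A (Localization.Away g)
          (RestrictScalars A (MvPowerSeries (Fin n) A)
            ((localCohomology I i).obj (ModuleCat.of (MvPowerSeries (Fin n) A) M)))) := by
  subst hI
  exact stmt0_general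
end

section
/- Let A be a domain, let T be a Noetherian A-algebra, and let I ⊆ T be an ideal such that T/I is a finitely generated A-module. Then for every finitely generated T-module M there exists a nonzero g ∈ A such that for every n ≥ 1 the module (M/I^n M) ⊗_A A_g is a free A_g-module. -/
open scoped TensorProduct

/-!
Let `x` be finitely many generators of the ideal `I`, let `y` be finitely many elements of `M`
generating `M / IM` over `A`, and order the products `x ^ α • y j` degree-lexicographically.
Modulo `I ^ n M` those of degree less than `n` generate, so `M / I ^ n M` is filtered by the spans
of final segments, with cyclic quotients `A / J α j`. The ideal `J α j` does not depend on `n`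
as long as `n` exceeds the degree of `α`, and it grows with `α`, because multiplication by
`x ^ γ` carries tails into tails. By Dickson's lemma the nonzero `J α j` lie above finitely many
minimal ones, so some nonzero `g` belongs to all of them. Once `g` is inverted, the products with
`J α j` nonzero become redundant, while those with `J α j = 0` stay linearly independent: they
form a basis.
-/

open Submodule (span)

section MonotoneIdeals

variable {A ι : Type*} [CommSemiring A] [NoZeroDivisors A] [Nontrivial A]
  [PartialOrder ι] [WellQuasiOrderedLE ι]

theorem exists_ne_zero_forall_eq_bot_or_mem_of_monotone {J : ι → Ideal A} (hJ : Monotone J) :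
    ∃ g ≠ 0, ∀ i, J i = ⊥ ∨ g ∈ J i := by
  have hfin : {i | Minimal (J · ≠ ⊥) i}.Finite :=
    WellQuasiOrderedLE.finite_of_isAntichain (setOfPred_minimal_antichain _)
  choose! a ha ha0 using fun i (hi : J i ≠ ⊥) => Submodule.exists_mem_ne_zero_of_ne_bot hi
  refine ⟨∏ i ∈ hfin.toFinset, a i,
    Finset.prod_ne_zero_iff.2 fun i hi => ha0 i (hfin.mem_toFinset.1 hi).1,
    fun i => or_iff_not_imp_left.2 fun hi => ?_⟩
  obtain ⟨b, hbi, hb⟩ := exists_minimal_le_of_wellFoundedLT (J · ≠ ⊥) i hi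
  exact (J i).mem_of_dvd (Finset.dvd_prod_of_mem a (hfin.mem_toFinset.2 hb)) (hJ hbi (ha b hb.1))

theorem exists_ne_zero_forall_forall_eq_bot_or_mem_of_monotone {κ : Type*} [Finite κ]
    {J : κ → ι → Ideal A} (hJ : ∀ k, Monotone (J k)) : ∃ g ≠ 0, ∀ k i, J k i = ⊥ ∨ g ∈ J k i := by
  have := Fintype.ofFinite κ
  choose g hg0 hg using fun k => exists_ne_zero_forall_eq_bot_or_mem_of_monotone (hJ k)
  exact ⟨∏ k, g k, Finset.prod_ne_zero_iff.2 fun k _ => hg0 k, fun k i => (hg k i).imp_right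
    ((J k i).mem_of_dvd (Finset.dvd_prod_of_mem g (Finset.mem_univ k)))⟩

end MonotoneIdeals

section OrderedGenerators

variable {A Q ι : Type*} [CommRing A] [AddCommGroup Q] [Module A Q] [LinearOrder ι] {v : ι → Q}

variable (A v) in
theorem linearIndepOn_setOf_colon_span_Ioi_eq_bot :
    LinearIndepOn A v {i | (span A (v '' Set.Ioi i)).colon {v i} = ⊥} := by
  rw [linearIndepOn_iff']
  intro t c ht hc
  induction t using Finset.induction_on_min with
  | empty => simp
  | insert i s his ih =>
    rw [Finset.coe_insert, Set.insert_subset_iff] at ht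
    rw [Finset.sum_insert fun h => (his i h).false] at hc
    have hci : c i = 0 := by
      rw [← Ideal.mem_bot, ← ht.1, Submodule.mem_colon_singleton, eq_neg_of_add_eq_zero_left hc]
      exact neg_mem (sum_mem fun j hj =>
        Submodule.smul_mem _ _ (Submodule.subset_span ⟨j, his j hj, rfl⟩))
    rw [hci, zero_smul, zero_add] at hc
    exact Finset.forall_mem_insert .. |>.2 ⟨hci, ih ht.2 hc⟩

variable {S Q' : Type*} [CommRing S] [Algebra A S] [AddCommGroup Q'] [Module A Q'] [Module S Q']
  [IsScalarTower A S Q'] {g : A}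

theorem forall_map_mem_of_mem_or_mem_colon_span_Ioi (hv : (Function.support v).Finite)
    (hg : IsUnit (algebraMap A S g)) (f : Q →ₗ[A] Q') (W : Submodule S Q')
    (h : ∀ i, f (v i) ∈ W ∨ g ∈ (span A (v '' Set.Ioi i)).colon {v i}) (i : ι) : f (v i) ∈ W := by
  by_cases hi : v i = 0
  · simp [hi]
  refine (hv.wellFoundedOn (r := (· > ·))).induction (P := fun i => f (v i) ∈ W) hi
    fun i _ ih => (h i).elim id fun hgi => ?_
  have htail : span A (v '' Set.Ioi i) ≤ (W.restrictScalars A).comap f := by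
    rw [Submodule.span_le]
    rintro _ ⟨j, hij, rfl⟩
    by_cases hj : v j = 0
    · simp [hj]
    · exact ih j hj hij
  have hgf : f (g • v i) ∈ W := htail (Submodule.mem_colon_singleton.1 hgi)
  rw [map_smul, ← algebraMap_smul S] at hgf
  exact (W.smul_mem_iff_of_isUnit hg).1 hgf

theorem free_isLocalizedModule_of_colon_span_Ioi [IsLocalization.Away g S]
    (hv : (Function.support v).Finite) (hspan : span A (Set.range v) = ⊤)
    (h : ∀ i, (span A (v '' Set.Ioi i)).colon {v i} = ⊥ ∨
      g ∈ (span A (v '' Set.Ioi i)).colon {v i})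
    (f : Q →ₗ[A] Q') [IsLocalizedModule (.powers g) f] : Module.Free S Q' := by
  have hli := (linearIndepOn_setOf_colon_span_Ioi_eq_bot A v).of_isLocalizedModule S (.powers g) f
  refine .of_basis (.mk hli ?_)
  rw [← span_eq_top_of_isLocalizedModule S (.powers g) f hspan, Submodule.span_le]
  rintro _ ⟨_, ⟨i, rfl⟩, rfl⟩
  refine forall_map_mem_of_mem_or_mem_colon_span_Ioi hv
    (IsLocalization.Away.algebraMap_isUnit g) f _ (fun j => (h j).imp_left fun hj => ?_) i
  exact Submodule.subset_span ⟨⟨j, hj⟩, rfl⟩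

end OrderedGenerators

/-- The indices of the products `x ^ α • y j`, where `α` is an exponent and `y` is indexed by `κ`.
They are ordered degree-lexicographically by exponent, ties being broken by the generator. -/
@[ext]
structure MonomialIndex (σ κ : Type*) where
  exponent : σ →₀ ℕ
  generator : κ

namespace MonomialIndex

variable {σ κ : Type*}

/-- The total degree of the exponent; the generators themselves have degree zero. -/
noncomputable def degree (i : MonomialIndex σ κ) : ℕ := i.exponent.degree

/-- Multiplication by the monomial `x ^ c`, on indices. -/
noncomputable instance : VAdd (σ →₀ ℕ) (MonomialIndex σ κ) where
  vadd c i := ⟨c + i.exponent, i.generator⟩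

theorem degree_vadd (c : σ →₀ ℕ) (i : MonomialIndex σ κ) :
    (c +ᵥ i).degree = c.degree + i.degree :=
  map_add Finsupp.degree _ _

theorem finite_setOf_degree_lt [Finite σ] [Finite κ] (n : ℕ) :
    {i : MonomialIndex σ κ | i.degree < n}.Finite :=
  .of_injOn (f := fun i => (i.exponent, i.generator))
    (t := {α : σ →₀ ℕ | α.degree < n} ×ˢ Set.univ)
    (fun _ hi => ⟨hi, trivial⟩)
    (fun _ _ _ _ h => MonomialIndex.ext (congrArg Prod.fst h) (congrArg Prod.snd h))
    ((Finsupp.finite_of_degree_lt n).prod Set.finite_univ)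

variable [LinearOrder σ] [LinearOrder κ]

noncomputable instance : LinearOrder (MonomialIndex σ κ) :=
  LinearOrder.lift' (β := DegLex (σ →₀ ℕ) ×ₗ κ) (fun i => toLex (toDegLex i.exponent, i.generator))
    fun _ _ h => MonomialIndex.ext (congrArg Prod.fst h) (congrArg Prod.snd h)

theorem lt_iff {i j : MonomialIndex σ κ} :
    i < j ↔ toDegLex i.exponent < toDegLex j.exponent ∨
      toDegLex i.exponent = toDegLex j.exponent ∧ i.generator < j.generator :=
  Prod.Lex.toLex_lt_toLex

theorem lt_of_degree_lt {i j : MonomialIndex σ κ} (h : i.degree < j.degree) : i < j :=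
  lt_iff.2 (.inl (Finsupp.DegLex.lt_iff.2 (.inl h)))

theorem vadd_lt_vadd {i j : MonomialIndex σ κ} (c : σ →₀ ℕ) (h : i < j) : c +ᵥ i < c +ᵥ j :=
  lt_iff.2 <| (lt_iff.1 h).imp (fun h => add_lt_add_right (α := DegLex (σ →₀ ℕ)) h (toDegLex c))
    fun h => ⟨congrArg (toDegLex c + ·) h.1, h.2⟩

end MonomialIndex

section Adic

variable (A : Type*) {T : Type*} [CommRing A] [CommRing T] [Algebra A T] (I : Ideal T)
  (M : Type*) [AddCommGroup M] [Module T M] [Module A M] [IsScalarTower A T M]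

/-- The `n`th step `I ^ n M` of the `I`-adic filtration, as a submodule over the base ring `A`. -/
def adicSubmodule (n : ℕ) : Submodule A M := (I ^ n • ⊤ : Submodule T M).restrictScalars A

variable {M I}

theorem mem_adicSubmodule {n : ℕ} {z : M} :
    z ∈ adicSubmodule A I M n ↔ z ∈ (I ^ n • ⊤ : Submodule T M) := Iff.rfl

variable (I M) in
theorem adicSubmodule_antitone : Antitone (adicSubmodule A I M) :=
  fun _ _ h _ hz => Submodule.smul_mono_left (Ideal.pow_le_pow_right h) hz

theorem smul_mem_adicSubmodule {k n : ℕ} {t : T} {z : M} (ht : t ∈ I ^ k)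
    (hz : z ∈ adicSubmodule A I M n) : t • z ∈ adicSubmodule A I M (k + n) := by
  rw [mem_adicSubmodule, pow_add, Submodule.mul_smul]
  exact Submodule.smul_mem_smul ht hz

end Adic

theorem span_range_pow_eq_span_finsuppProd {T σ : Type*} [CommSemiring T] (x : σ → T) (n : ℕ) :
    Ideal.span (Set.range x) ^ n =
      Ideal.span ((fun α : σ →₀ ℕ => α.prod (x · ^ ·)) '' {α | α.degree = n}) := by
  rw [Ideal.span, Submodule.span_pow, ← Set.image_univ, Finsupp.image_pow_eq_finsuppProd_image]
  simp [Finsupp.degree]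

section MonomialSMul

variable {A T M σ κ : Type*} [CommRing A] [CommRing T] [Algebra A T] {I : Ideal T}
  [AddCommGroup M] [Module T M] [Module A M] [IsScalarTower A T M] {x : σ → T} {y : κ → M}

/-- The product `x ^ α • y j` attached to the index `(α, j)`. -/
noncomputable def monomialSMul (x : σ → T) (y : κ → M) (i : MonomialIndex σ κ) : M :=
  i.exponent.prod (x · ^ ·) • y i.generator

theorem monomialSMul_vadd (c : σ →₀ ℕ) (i : MonomialIndex σ κ) :
    monomialSMul x y (c +ᵥ i) = c.prod (x · ^ ·) • monomialSMul x y i := by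
  rw [monomialSMul, monomialSMul, ← mul_smul,
    ← Finsupp.prod_add_index' (fun _ => pow_zero _) fun _ => pow_add _]
  rfl

theorem finsuppProd_mem_pow (hx : Ideal.span (Set.range x) = I) (α : σ →₀ ℕ) :
    α.prod (x · ^ ·) ∈ I ^ α.degree := by
  rw [← hx, span_range_pow_eq_span_finsuppProd]
  exact Ideal.subset_span ⟨α, rfl, rfl⟩

theorem monomialSMul_mem_adicSubmodule (hx : Ideal.span (Set.range x) = I)
    (i : MonomialIndex σ κ) : monomialSMul x y i ∈ adicSubmodule A I M i.degree := by
  rw [mem_adicSubmodule, monomialSMul]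
  exact Submodule.smul_mem_smul (finsuppProd_mem_pow hx i.exponent) Submodule.mem_top

theorem adicSubmodule_le_span_sup_succ (hx : Ideal.span (Set.range x) = I)
    (hy : span A (Set.range y) ⊔ adicSubmodule A I M 1 = ⊤) (k : ℕ) :
    adicSubmodule A I M k ≤
      span A (monomialSMul x y '' {i | i.degree = k}) ⊔ adicSubmodule A I M (k + 1) := by
  set N := span A (monomialSMul x y '' {i | i.degree = k}) ⊔ adicSubmodule A I M (k + 1)
  have monomial_smul_mem (α : σ →₀ ℕ) (hα : α.degree = k) (z : M) : α.prod (x · ^ ·) • z ∈ N := by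
    suffices ⊤ ≤ N.comap (Algebra.lsmul A A M (α.prod (x · ^ ·))) from this Submodule.mem_top
    rw [← hy, sup_le_iff, Submodule.span_le]
    constructor
    · rintro _ ⟨j, rfl⟩
      exact Submodule.mem_sup_left (Submodule.subset_span ⟨⟨α, j⟩, hα, rfl⟩)
    · exact fun z hz => Submodule.mem_sup_right
        (smul_mem_adicSubmodule A (hα ▸ finsuppProd_mem_pow hx α) hz)
  have smul_mem (r : T) (hr : r ∈ I ^ k) (z : M) : r • z ∈ N := by
    rw [← hx, span_range_pow_eq_span_finsuppProd] at hr
    induction hr using Submodule.span_induction generalizing z with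
    | mem r hr =>
      obtain ⟨α, hα, rfl⟩ := hr
      exact monomial_smul_mem α hα z
    | zero => simp
    | add a b _ _ ha hb => exact add_smul a b z ▸ add_mem (ha z) (hb z)
    | smul a b _ hb => exact smul_assoc a b z ▸ smul_comm a b z ▸ hb (a • z)
  intro w hw
  rw [mem_adicSubmodule] at hw
  induction hw using Submodule.smul_induction_on' with
  | smul r hr z _ => exact smul_mem r hr z
  | add _ _ _ _ hu hv => exact add_mem hu hv

theorem adicSubmodule_le_span_sup (hx : Ideal.span (Set.range x) = I)
    (hy : span A (Set.range y) ⊔ adicSubmodule A I M 1 = ⊤) (k n : ℕ) :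
    adicSubmodule A I M k ≤
      span A (monomialSMul x y '' {i | k ≤ i.degree}) ⊔ adicSubmodule A I M n := by
  rcases le_total n k with h | h
  · exact (adicSubmodule_antitone A I M h).trans le_sup_right
  induction n, h using Nat.le_induction with
  | base => exact le_sup_right
  | succ n hkn ih =>
    refine ih.trans (sup_le le_sup_left ((adicSubmodule_le_span_sup_succ hx hy n).trans ?_))
    gcongr
    exact fun hi => hi ▸ hkn

variable [LinearOrder σ] [LinearOrder κ]

variable (A I x y) in
/-- The span of the products after the `i`th, together with `I ^ (i.degree + 1) M`. The second
summand stands for the products of higher degree, which generate it only modulo each `I ^ n M`;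
it is what makes the tail independent of `n`. -/
noncomputable def monomialTail (i : MonomialIndex σ κ) : Submodule A M :=
  span A (monomialSMul x y '' Set.Ioi i) ⊔ adicSubmodule A I M (i.degree + 1)

theorem span_Ioi_sup_adicSubmodule_eq_monomialTail (hx : Ideal.span (Set.range x) = I)
    (hy : span A (Set.range y) ⊔ adicSubmodule A I M 1 = ⊤) {i : MonomialIndex σ κ} {n : ℕ}
    (hi : i.degree < n) :
    span A (monomialSMul x y '' Set.Ioi i) ⊔ adicSubmodule A I M n = monomialTail A I x y i := by
  refine le_antisymm (sup_le_sup_left (adicSubmodule_antitone A I M hi) _) (sup_le le_sup_left ?_)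
  refine (adicSubmodule_le_span_sup hx hy (i.degree + 1) n).trans ?_
  gcongr
  exact fun j hj => MonomialIndex.lt_of_degree_lt hj

theorem smul_mem_monomialTail_vadd (hx : Ideal.span (Set.range x) = I) (c : σ →₀ ℕ)
    {i : MonomialIndex σ κ} {z : M} (hz : z ∈ monomialTail A I x y i) :
    c.prod (x · ^ ·) • z ∈ monomialTail A I x y (c +ᵥ i) := by
  suffices monomialTail A I x y i ≤
    (monomialTail A I x y (c +ᵥ i)).comap (Algebra.lsmul A A M (c.prod (x · ^ ·))) from this hz
  refine sup_le (Submodule.span_le.2 ?_) fun z hz => Submodule.mem_sup_right ?_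
  · rintro _ ⟨j, hij, rfl⟩
    exact Submodule.mem_sup_left (Submodule.subset_span
      ⟨c +ᵥ j, MonomialIndex.vadd_lt_vadd c hij, monomialSMul_vadd c j⟩)
  · rw [MonomialIndex.degree_vadd, add_assoc]
    exact smul_mem_adicSubmodule A (finsuppProd_mem_pow hx c) hz

theorem monotone_colon_monomialTail (hx : Ideal.span (Set.range x) = I) (j : κ) :
    Monotone fun α : σ →₀ ℕ => (monomialTail A I x y ⟨α, j⟩).colon {monomialSMul x y ⟨α, j⟩} := by
  intro α β hαβ a ha
  obtain ⟨c, rfl⟩ := le_iff_exists_add'.1 hαβ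
  rw [Submodule.mem_colon_singleton] at ha ⊢
  have h := smul_mem_monomialTail_vadd hx c ha
  rwa [smul_algebra_smul_comm, ← monomialSMul_vadd] at h

theorem exists_ne_zero_forall_colon_monomialTail [IsDomain A] [Finite σ] [Finite κ]
    (hx : Ideal.span (Set.range x) = I) :
    ∃ g : A, g ≠ 0 ∧ ∀ i, (monomialTail A I x y i).colon {monomialSMul x y i} = ⊥ ∨
      g ∈ (monomialTail A I x y i).colon {monomialSMul x y i} := by
  obtain ⟨g, hg0, hg⟩ := exists_ne_zero_forall_forall_eq_bot_or_mem_of_monotone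
    (monotone_colon_monomialTail (A := A) (y := y) hx)
  exact ⟨g, hg0, fun i => hg i.generator i.exponent⟩

theorem free_tensorProduct_quotient_of_colon_monomialTail [Finite σ] [Finite κ]
    (hx : Ideal.span (Set.range x) = I)
    (hy : span A (Set.range y) ⊔ adicSubmodule A I M 1 = ⊤) {g : A}
    (hg : ∀ i, (monomialTail A I x y i).colon {monomialSMul x y i} = ⊥ ∨
      g ∈ (monomialTail A I x y i).colon {monomialSMul x y i})
    (S : Type*) [CommRing S] [Algebra A S] [IsLocalization.Away g S] (n : ℕ) :
    Module.Free S (S ⊗[A] (M ⧸ (I ^ n • ⊤ : Submodule T M))) := by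
  let π := (I ^ n • ⊤ : Submodule T M).mkQ.restrictScalars A
  have hπ : π.range = ⊤ := by
    rw [LinearMap.range_restrictScalars, Submodule.range_mkQ, Submodule.restrictScalars_top]
  have hker : π.ker = adicSubmodule A I M n := by
    rw [LinearMap.ker_restrictScalars, Submodule.ker_mkQ, adicSubmodule]
  have π_eq_zero {i : MonomialIndex σ κ} (hi : n ≤ i.degree) : π (monomialSMul x y i) = 0 := by
    rw [← LinearMap.mem_ker, hker]
    exact adicSubmodule_antitone A I M hi (monomialSMul_mem_adicSubmodule hx i)
  have hspan : span A (Set.range (π ∘ monomialSMul x y)) = ⊤ := by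
    have h := adicSubmodule_le_span_sup hx hy 0 n
    rw [Set.range_comp, ← Submodule.map_span, LinearMap.map_eq_top_iff hπ, hker]
    simpa [adicSubmodule] using h
  have hcolon (i : MonomialIndex σ κ) (hi : i.degree < n) :
      (span A (π ∘ monomialSMul x y '' Set.Ioi i)).colon {(π ∘ monomialSMul x y) i} =
        (monomialTail A I x y i).colon {monomialSMul x y i} := by
    ext a
    rw [Set.image_comp, ← Submodule.map_span, ← span_Ioi_sup_adicSubmodule_eq_monomialTail hx hy hi,
      ← hker, ← Submodule.comap_map_eq]
    simp
  refine free_isLocalizedModule_of_colon_span_Ioi (g := g) (v := π ∘ monomialSMul x y)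
    ((MonomialIndex.finite_setOf_degree_lt n).subset fun i => ?_) hspan (fun i => ?_)
    (TensorProduct.mk A S _ 1)
  · exact fun hi => lt_of_not_ge fun h => hi (π_eq_zero h)
  · rcases lt_or_ge i.degree n with hi | hi
    · rw [hcolon i hi]
      exact hg i
    · exact .inr (by simp [π_eq_zero hi])

end MonomialSMul

theorem exists_fin_span_range_sup_ker_eq_top {A M Q : Type*} [Ring A] [AddCommGroup M]
    [Module A M] [AddCommGroup Q] [Module A Q] [Module.Finite A Q] {f : M →ₗ[A] Q}
    (hf : f.range = ⊤) : ∃ (q : ℕ) (y : Fin q → M), span A (Set.range y) ⊔ f.ker = ⊤ := by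
  obtain ⟨q, y', hy'⟩ := Module.Finite.exists_fin (R := A) (M := Q)
  obtain ⟨y, rfl⟩ := (LinearMap.range_eq_top.1 hf).comp_left y'
  refine ⟨q, y, ?_⟩
  rw [← LinearMap.map_eq_top_iff hf, Submodule.map_span, ← Set.range_comp, hy']

theorem stmt7_general {A T M : Type*} [CommRing A] [IsDomain A] [CommRing T] [Algebra A T]
    [AddCommGroup M] [Module T M] [Module A M] [IsScalarTower A T M] {I : Ideal T} (hI : I.FG)
    [Module.Finite A (M ⧸ (I • ⊤ : Submodule T M))] :
    ∃ g : A, g ≠ 0 ∧ ∀ n : ℕ, Module.Free (Localization.Away g)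
      (Localization.Away g ⊗[A] (M ⧸ (I ^ n • ⊤ : Submodule T M))) := by
  obtain ⟨m, x, hx⟩ := Submodule.fg_iff_exists_fin_generating_family.1 hI
  let π := (I • ⊤ : Submodule T M).mkQ.restrictScalars A
  have hker : π.ker = adicSubmodule A I M 1 := by
    rw [LinearMap.ker_restrictScalars, Submodule.ker_mkQ, adicSubmodule, pow_one]
  have hπ : π.range = ⊤ := by
    rw [LinearMap.range_restrictScalars, Submodule.range_mkQ, Submodule.restrictScalars_top]
  obtain ⟨q, y, hy⟩ := exists_fin_span_range_sup_ker_eq_top hπ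
  obtain ⟨g, hg0, hg⟩ := exists_ne_zero_forall_colon_monomialTail (A := A) (y := y) hx
  exact ⟨g, hg0, free_tensorProduct_quotient_of_colon_monomialTail hx (hker ▸ hy) hg _⟩

/-- **Simultaneous generic freeness.**  Let `A` be a domain, `T` a Noetherian `A`-algebra and
`I ⊆ T` an ideal with `T/I` a finitely generated `A`-module.  For every finitely generated
`T`-module `M` there is a nonzero `g ∈ A` such that `(M/IⁿM) ⊗[A] A_g` is a free `A_g`-module
for all `n ≥ 1`. -/
theorem stmt7 (A : Type) [CommRing A] [IsDomain A]
    (T : Type) [CommRing T] [Algebra A T] [IsNoetherianRing T]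
    (I : Ideal T) [Module.Finite A (T ⧸ I)]
    (M : Type) [AddCommGroup M] [Module T M] [Module.Finite T M] :
    ∃ g : A, g ≠ 0 ∧ ∀ n : ℕ, 1 ≤ n →
      Module.Free (Localization.Away g)
        (TensorProduct A (Localization.Away g)
          (RestrictScalars A T (M ⧸ (I ^ n • ⊤ : Submodule T M)))) := by
  let _ : Module A M := Module.restrictScalars A T M
  have : IsScalarTower A T M := .restrictScalars A T M
  have : Module.Finite A (M ⧸ (I • ⊤ : Submodule T M)) := .trans (T ⧸ I) _
  exact (stmt7_general (IsNoetherian.noetherian I)).imp fun g hg => ⟨hg.1, fun n _ => hg.2 n⟩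
end
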